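/- arXiv:1504.01029 — 2 statements merged into one kernel-verified Lean document; each statement's English description precedes it below -/
import Mathlib

section
/- Let 2 ≤ m ≤ n and let S denote the set of separable states on ℂ^m ⊗ ℂ^n. Then for every δ with 1/10 < δ < 1/4, the mean width of S satisfies w(S) ≤ 3√(ln(1+2/δ)) / ((1−2δ²)² m √n). -/
/-!
The mean width of the separable states is the mean, over `X` uniform on the Hilbert–Schmidt sphere
of traceless Hermitian matrices, of the maximum of `⟨x ⊗ y|X|x ⊗ y⟩` over unit vectors `x`, `y`.

*Discretization.* The unit spheres of `ℂ^m` and `ℂ^n` have `δ`-nets with at most `(1 + 2/δ)^(2m)`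
and `(1 + 2/δ)^(2n)` points (`exists_net`). Restricting a quadratic form to such a net decreases the
maximum of its absolute value by a factor of at most `1 - 2δ²` (`net_step`). Applied to each of
the two factors, this shows that restricting `x` and `y` to the nets costs at most a factor
`(1 - 2δ²)²` (`product_net`).

*Maximal inequality.* Each `X ↦ ⟨x ⊗ y|X|x ⊗ y⟩` is a linear functional of norm at most one
(`exists_repr`), and such a functional is sub-Gaussian on the sphere of `ℝ^N` with variance
parameter `1/N` (`sphere_cosh`). Therefore the mean of the maximal absolute value of `M` of them
is at most `√(2 log (2M) / N)` (`sphere_max_le`).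

With `N = m²n² - 1` and `M ≤ (1 + 2/δ)^(2m + 2n)`, the inequality `m + n ≤ 2n` and the bound
`log (1 + 2/δ) ≥ 3 log 2` lead to the constant `3` (`numeric_bound`).
-/

open MeasureTheory Metric
open scoped ComplexOrder RealInnerProductSpace

noncomputable section

/-- The uniform probability measure on the unit Euclidean sphere of `ℝ^N`. -/
def sphereUniform (N : ℕ) : Measure (sphere (0 : EuclideanSpace ℝ (Fin N)) 1) :=
  (((volume : Measure (EuclideanSpace ℝ (Fin N))).toSphere Set.univ)⁻¹) •
    (volume : Measure (EuclideanSpace ℝ (Fin N))).toSphere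

/-- `f` identifies `ℝ^N` isometrically with the subspace of traceless Hermitian matrices,
equipped with the Hilbert–Schmidt inner product `⟨A, B⟩ = Tr(AB)`. -/
structure IsHermParam {ι : Type*} [Fintype ι] {N : ℕ}
    (f : EuclideanSpace ℝ (Fin N) →ₗ[ℝ] Matrix ι ι ℂ) : Prop where
  herm : ∀ x, (f x).IsHermitian
  traceless : ∀ x, (f x).trace = 0
  inner_eq : ∀ x y, ((f x * f y).trace).re = ⟪x, y⟫
  surj : ∀ A : Matrix ι ι ℂ, A.IsHermitian → A.trace = 0 → ∃ x, f x = A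

/-- The mean width of a set of matrices, computed in the traceless Hermitian subspace
via an isometric parametrization `f`:
`w(K) = ∫_S max_{M ∈ K} Tr(X M) dσ(X)`, with `σ` the uniform probability measure on the
Hilbert–Schmidt unit sphere of traceless Hermitian matrices. -/
def matMeanWidth {ι : Type*} [Fintype ι] {N : ℕ}
    (f : EuclideanSpace ℝ (Fin N) →ₗ[ℝ] Matrix ι ι ℂ) (K : Set (Matrix ι ι ℂ)) : ℝ :=
  ∫ u, sSup ((fun M => ((f u * M).trace).re) '' K) ∂(sphereUniform N)

/-- The maximally mixed state `𝟙/n`. -/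
def maxMixed (ι : Type*) [Fintype ι] [DecidableEq ι] : Matrix ι ι ℂ :=
  ((Fintype.card ι : ℂ))⁻¹ • 1

/-- The volume radius of a set `K` of trace-one matrices, computed in the hyperplane of
trace-one Hermitian matrices (centered at the maximally mixed state) via an isometric
parametrization `f` of the traceless Hermitian subspace:
`vrad(K) = (vol K / vol B)^(1/N)`. -/
def matVolRad {ι : Type*} [Fintype ι] [DecidableEq ι] {N : ℕ}
    (f : EuclideanSpace ℝ (Fin N) →ₗ[ℝ] Matrix ι ι ℂ) (K : Set (Matrix ι ι ℂ)) : ℝ :=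
  ((volume (f ⁻¹' ((fun A => A - maxMixed ι) '' K))).toReal /
      (volume (ball (0 : EuclideanSpace ℝ (Fin N)) 1)).toReal) ^ ((N : ℝ)⁻¹)

/-- The set of density matrices (states). -/
def densityMatrices (ι : Type*) [Fintype ι] : Set (Matrix ι ι ℂ) :=
  {ρ | ρ.PosSemidef ∧ ρ.trace = 1}

end

noncomputable section

open scoped Kronecker

/-- The pure product state `|x⟩⟨x| ⊗ |y⟩⟨y|` on `ℂ^m ⊗ ℂ^n`. -/
def prodPureBip {m n : ℕ} (x : Fin m → ℂ) (y : Fin n → ℂ) :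
    Matrix (Fin m × Fin n) (Fin m × Fin n) ℂ :=
  (Matrix.vecMulVec x (star x)) ⊗ₖ (Matrix.vecMulVec y (star y))

/-- Separable states on `ℂ^m ⊗ ℂ^n`: convex combinations of pure product states. -/
def SepBip (m n : ℕ) : Set (Matrix (Fin m × Fin n) (Fin m × Fin n) ℂ) :=
  convexHull ℝ {ρ | ∃ (x : Fin m → ℂ) (y : Fin n → ℂ),
    (∑ i, ‖x i‖ ^ 2 = 1) ∧ (∑ j, ‖y j‖ ^ 2 = 1) ∧ ρ = prodPureBip x y}

/-! ### Nets on spheres -/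

/-- Volumetric bound: the balls of radius `δ/2` around the points of a `δ`-separated subset of the
unit sphere are disjoint and lie in the ball of radius `1 + δ/2`. -/
lemma card_le_of_sep {E : Type*} [NormedAddCommGroup E] [NormedSpace ℝ E]
    [FiniteDimensional ℝ E] {δ : ℝ} (hδ : 0 < δ) (s : Finset E) (hs : ∀ c ∈ s, ‖c‖ = 1)
    (h : ∀ c ∈ s, ∀ d ∈ s, c ≠ d → δ ≤ ‖c - d‖) :
    (s.card : ℝ) ≤ (1 + 2 / δ) ^ Module.finrank ℝ E := by
  borelize E
  let μ : Measure E := Measure.addHaar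
  have hd : 0 < δ / 2 := by positivity
  have hρ : 0 < 1 + δ / 2 := by positivity
  have D : Set.PairwiseDisjoint (s : Set E) (fun c => ball (c : E) (δ / 2)) := by
    intro c hc d hd hcd
    apply ball_disjoint_ball
    rw [dist_eq_norm]
    simpa using h c hc d hd hcd
  have hsub : (⋃ c ∈ s, ball (c : E) (δ / 2)) ⊆ ball (0 : E) (1 + δ / 2) := by
    refine Set.iUnion₂_subset fun x hx => ?_
    apply ball_subset_ball'
    rw [dist_zero_right, hs x hx, add_comm]
  have I : (s.card : ENNReal) * ENNReal.ofReal ((δ / 2) ^ Module.finrank ℝ E) * μ (ball 0 1) ≤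
      ENNReal.ofReal ((1 + δ / 2) ^ Module.finrank ℝ E) * μ (ball 0 1) := by
    rw [← μ.addHaar_ball_of_pos 0 hρ]
    refine le_trans (le_of_eq ?_) (measure_mono hsub)
    rw [measure_biUnion_finset D fun c _ => measurableSet_ball]
    simp only [μ.addHaar_ball_of_pos _ hd]
    simp only [Finset.sum_const, nsmul_eq_mul, mul_assoc]
  have J := (ENNReal.mul_le_mul_iff_left (measure_ball_pos _ _ zero_lt_one).ne'
    measure_ball_lt_top.ne).1 I
  have K : (s.card : ℝ) * (δ / 2) ^ Module.finrank ℝ E ≤ (1 + δ / 2) ^ Module.finrank ℝ E := by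
    have := ENNReal.toReal_mono ENNReal.ofReal_ne_top J
    rwa [ENNReal.toReal_mul, ENNReal.toReal_ofReal (by positivity),
      ENNReal.toReal_ofReal (by positivity), ENNReal.toReal_natCast] at this
  have e : (1 + 2 / δ) = (1 + δ / 2) / (δ / 2) := by field_simp; ring
  rw [e, div_pow, le_div_iff₀ (by positivity)]
  exact K

/-- The unit sphere has a `δ`-net of at most `(1 + 2/δ) ^ dim` points, namely a `δ`-separated
subset of maximal cardinality. -/
lemma exists_net (E : Type*) [NormedAddCommGroup E] [NormedSpace ℝ E]
    [FiniteDimensional ℝ E] {δ : ℝ} (hδ : 0 < δ) :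
    ∃ s : Finset E, (∀ c ∈ s, ‖c‖ = 1) ∧ (s.card : ℝ) ≤ (1 + 2 / δ) ^ Module.finrank ℝ E ∧
      ∀ x : E, ‖x‖ = 1 → ∃ c ∈ s, ‖c - x‖ ≤ δ := by
  classical
  let T : Set ℕ := {k | ∃ s : Finset E, s.card = k ∧ (∀ c ∈ s, ‖c‖ = 1) ∧
    ∀ c ∈ s, ∀ d ∈ s, c ≠ d → δ ≤ ‖c - d‖}
  have hT : T.Nonempty := ⟨0, ∅, by simp⟩
  have hB : BddAbove T := by
    refine ⟨⌊(1 + 2 / δ) ^ Module.finrank ℝ E⌋₊, ?_⟩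
    rintro k ⟨s, rfl, h1, h2⟩
    exact Nat.le_floor (card_le_of_sep hδ s h1 h2)
  obtain ⟨s, hs, h1, h2⟩ := Nat.sSup_mem hT hB
  refine ⟨s, h1, card_le_of_sep hδ s h1 h2, fun x hx => ?_⟩
  by_contra! hc
  have hxs : x ∉ s := fun h => by
    have := hc x h
    simp at this
    linarith
  have : s.card + 1 ∈ T := by
    refine ⟨insert x s, Finset.card_insert_of_notMem hxs, ?_, ?_⟩
    · intro c hc'
      rcases Finset.mem_insert.1 hc' with rfl | h
      exacts [hx, h1 c h]
    · intro c hc' d hd' hcd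
      rcases Finset.mem_insert.1 hc' with rfl | h <;> rcases Finset.mem_insert.1 hd' with rfl | h'
      · exact absurd rfl hcd
      · rw [norm_sub_rev]; exact (hc d h').le
      · exact (hc c h).le
      · exact h2 c h d h' hcd
  have := le_csSup hB this
  omega

/-! ### Quadratic forms on nets

A real quadratic form is encoded by the expansion of `q (x + t • h)` as a polynomial in `t` with
constant coefficient `q x` and leading coefficient `q h`. -/

lemma quad_zero {V : Type*} [AddCommGroup V] [Module ℝ V] {q : V → ℝ}
    (hquad : ∀ x h, ∃ b, ∀ t : ℝ, q (x + t • h) = q x + t * b + t ^ 2 * q h) : q 0 = 0 := by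
  obtain ⟨b, hb⟩ := hquad 0 0
  have h1 := hb 1
  have h2 := hb (-1)
  simp at h1 h2
  linarith

lemma quad_smul {V : Type*} [AddCommGroup V] [Module ℝ V] {q : V → ℝ}
    (hquad : ∀ x h, ∃ b, ∀ t : ℝ, q (x + t • h) = q x + t * b + t ^ 2 * q h) (t : ℝ) (h : V) :
    q (t • h) = t ^ 2 * q h := by
  have h0 := quad_zero hquad
  obtain ⟨b, hb⟩ := hquad 0 h
  have h1 := hb 1
  have h2 := hb t
  simp only [h0, zero_add, one_smul, one_mul, one_pow] at h1 h2
  have : b = 0 := by linarith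
  rw [h2, this]; ring

/-- A quadratic form loses at most a factor `1 - 2δ²` of its maximal absolute value on a `δ`-net of
the unit sphere. Let `L` be the maximum of `|q|`, attained at `x`, say with `q x = L`. The form
`L ‖·‖² - q` is nonnegative and vanishes at `x`, so its cross terms with `x` vanish, and at a net
point `x + h` it takes the same value as at `h`, which is at most `2 L ‖h‖² ≤ 2 L δ²`. -/
lemma net_step {V : Type*} [NormedAddCommGroup V] [InnerProductSpace ℝ V]
    [FiniteDimensional ℝ V] {q : V → ℝ} (hc : Continuous q)
    (hquad : ∀ x h, ∃ b, ∀ t : ℝ, q (x + t • h) = q x + t * b + t ^ 2 * q h)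
    {δ : ℝ} {s : Finset V} (hs : ∀ c ∈ s, ‖c‖ = 1)
    (hnet : ∀ x : V, ‖x‖ = 1 → ∃ c ∈ s, ‖c - x‖ ≤ δ) (x₀ : V) (hx₀ : ‖x₀‖ = 1) :
    ∃ c ∈ s, (1 - 2 * δ ^ 2) * |q x₀| ≤ |q c| := by
  obtain ⟨x, hx, hmax⟩ := (isCompact_sphere (0 : V) 1).exists_isMaxOn ⟨x₀, by simpa using hx₀⟩
    (f := fun x => |q x|) hc.abs.continuousOn
  have hx1 : ‖x‖ = 1 := by simpa using hx
  set L := |q x| with hL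
  have hle : ∀ y : V, |q y| ≤ L * ‖y‖ ^ 2 := by
    intro y
    by_cases hy : y = 0
    · simp [hy, quad_zero hquad]
    have hy' : 0 < ‖y‖ := norm_pos_iff.2 hy
    have h1 : |q (‖y‖⁻¹ • y)| ≤ L :=
      hmax (a := ‖y‖⁻¹ • y) (by simp [norm_smul, hy'.ne'])
    rw [quad_smul hquad, abs_mul, abs_of_nonneg (by positivity), inv_pow,
      inv_mul_le_iff₀ (by positivity)] at h1
    linarith
  obtain ⟨c, hcs, hcx⟩ := hnet x hx1
  refine ⟨c, hcs, ?_⟩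
  have hx₀L : |q x₀| ≤ L := by simpa [hx₀] using hle x₀
  have hL0 : 0 ≤ L := abs_nonneg _
  -- `ε` is the sign of `q x`; below, the role of `q` is played by `ε q`.
  obtain ⟨ε, hε, hεx⟩ : ∃ ε : ℝ, |ε| = 1 ∧ ε * q x = L := by
    rcases abs_choice (q x) with h | h
    · exact ⟨1, by simp, by rw [hL, h]; ring⟩
    · exact ⟨-1, by simp, by rw [hL, h]; ring⟩
  have hεle : ∀ y, |ε * q y| ≤ L * ‖y‖ ^ 2 := fun y => by
    rw [abs_mul, hε, one_mul]; exact hle y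
  set h := c - x with hh
  obtain ⟨b, hb⟩ := hquad x h
  set i := ⟪x, h⟫ with hi
  have hn : ∀ t : ℝ, ‖x + t • h‖ ^ 2 = 1 + 2 * t * i + t ^ 2 * ‖h‖ ^ 2 := by
    intro t
    rw [norm_add_sq_real, hx1, norm_smul, inner_smul_right, mul_pow, Real.norm_eq_abs, sq_abs]
    ring
  have hpos : ∀ t : ℝ, 0 ≤ t * (2 * L * i - ε * b) + t ^ 2 * (L * ‖h‖ ^ 2 - ε * q h) := by
    intro t
    have h1 := (abs_le.1 (hεle (x + t • h))).2
    rw [hb t, hn t] at h1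
    nlinarith
  have hcross : 2 * L * i - ε * b = 0 := by
    set B := 2 * L * i - ε * b
    set C := L * ‖h‖ ^ 2 - ε * q h
    by_contra hB
    have hC : 0 ≤ C := by
      have h1 := hpos 1; have h2 := hpos (-1); nlinarith
    have h3 := hpos (-B / (C + 1))
    have e : -B / (C + 1) * B + (-B / (C + 1)) ^ 2 * C = - (B ^ 2 / (C + 1) ^ 2) := by
      field_simp; ring
    rw [e] at h3
    have : 0 < B ^ 2 / (C + 1) ^ 2 := by positivity
    linarith
  have h1 := hb 1
  have h2 := hn 1
  have hxc : x + h = c := by rw [hh]; abel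
  rw [one_smul, hxc] at h1 h2
  rw [hs c hcs] at h2
  have h3 := (abs_le.1 (hεle h)).1
  have h4 : ‖h‖ ^ 2 ≤ δ ^ 2 := by gcongr
  have h5 : (1 - 2 * δ ^ 2) * L ≤ ε * q c := by rw [h1]; nlinarith
  have h6 : ε * q c ≤ |q c| := by
    have := le_abs_self (ε * q c); rwa [abs_mul, hε, one_mul] at this
  by_cases hk : 0 ≤ 1 - 2 * δ ^ 2
  · exact (mul_le_mul_of_nonneg_left hx₀L hk).trans (h5.trans h6)
  · exact (mul_nonpos_of_nonpos_of_nonneg (not_le.1 hk).le (abs_nonneg _)).trans (abs_nonneg _)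

/-! ### Convexity of `cosh √t` -/

lemma sinh_slope {x y : ℝ} (hx : 0 ≤ x) (hxy : x ≤ y) : y * Real.sinh x ≤ x * Real.sinh y := by
  have hconv : ConvexOn ℝ (Set.Ici (0 : ℝ)) Real.sinh := by
    apply MonotoneOn.convexOn_of_deriv (convex_Ici 0) Real.continuous_sinh.continuousOn
      Real.differentiable_sinh.differentiableOn
    rw [Real.deriv_sinh, interior_Ici]
    exact Real.cosh_strictMonoOn.monotoneOn.mono Set.Ioi_subset_Ici_self
  rcases hx.eq_or_lt with rfl | hx'
  · simp
  have hy : 0 < y := hx'.trans_le hxy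
  have := hconv.2 (Set.self_mem_Ici : (0 : ℝ) ∈ Set.Ici 0) (Set.mem_Ici.2 hy.le)
    (show 0 ≤ 1 - x / y by rw [sub_nonneg, div_le_one hy]; exact hxy)
    (show 0 ≤ x / y by positivity) (by ring)
  simp only [smul_eq_mul, mul_zero, Real.sinh_zero, zero_add] at this
  rw [div_mul_cancel₀ _ hy.ne', div_mul_eq_mul_div, le_div_iff₀ hy] at this
  linarith

/-- Tangent line inequality for the convex function `t ↦ cosh √t`, at the point `t = b²`. -/
lemma cosh_tangent_pos {a b : ℝ} (ha : 0 ≤ a) (hb : 0 < b) :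
    Real.cosh b + Real.sinh b / (2 * b) * (a ^ 2 - b ^ 2) ≤ Real.cosh a := by
  set k := Real.sinh b / (2 * b) with hk
  let F : ℝ → ℝ := fun a => Real.cosh a - k * a ^ 2
  have hF : ∀ x, HasDerivAt F (Real.sinh x - k * (2 * x)) x := fun x => by
    have := (Real.hasDerivAt_cosh x).sub ((hasDerivAt_pow 2 x).const_mul k)
    exact this.congr_deriv (by norm_num)
  have hkx : ∀ x, k * (2 * x) = x * Real.sinh b / b := fun x => by rw [hk]; field_simp
  have hFc : Continuous F := by fun_prop
  have key : F b ≤ F a := by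
    rcases le_total a b with h | h
    · have : AntitoneOn F (Set.Icc 0 b) := by
        apply antitoneOn_of_deriv_nonpos (convex_Icc 0 b) hFc.continuousOn
          (fun x _ => (hF x).differentiableAt.differentiableWithinAt)
        intro x hx
        rw [interior_Icc] at hx
        rw [(hF x).deriv, hkx, sub_nonpos, le_div_iff₀ hb]
        linarith [sinh_slope hx.1.le hx.2.le]
      exact this ⟨ha, h⟩ ⟨hb.le, le_rfl⟩ h
    · have : MonotoneOn F (Set.Ici b) := by
        apply monotoneOn_of_deriv_nonneg (convex_Ici b) hFc.continuousOn
          (fun x _ => (hF x).differentiableAt.differentiableWithinAt)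
        intro x hx
        rw [interior_Ici] at hx
        rw [(hF x).deriv, hkx, sub_nonneg, div_le_iff₀ hb]
        linarith [sinh_slope hb.le (le_of_lt hx)]
      exact this Set.self_mem_Ici h h
  simp only [F] at key
  linarith

lemma cosh_tangent (v : ℝ) {r R : ℝ} (hr : 0 ≤ r) (hR : 0 < R) :
    Real.cosh (R * v) + v * Real.sinh (R * v) / (2 * R) * (r ^ 2 - R ^ 2) ≤ Real.cosh (r * v) := by
  wlog hv : 0 ≤ v generalizing v
  · have := this (-v) (by linarith)
    simpa using this
  rcases hv.eq_or_lt with rfl | hv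
  · simp
  have h := cosh_tangent_pos (a := r * v) (b := R * v) (by positivity) (by positivity)
  convert h using 2
  field_simp

/-! ### Polar coordinates and Gaussian integrals -/

section polar
variable {E : Type*} [NormedAddCommGroup E] [NormedSpace ℝ E] [FiniteDimensional ℝ E]
  [MeasurableSpace E] [BorelSpace E] [Nontrivial E] (μ : Measure E) [μ.IsAddHaarMeasure]

lemma integral_polar (F : E → ℝ) :
    ∫ x, F x ∂μ = ∫ p, F ((p.2 : ℝ) • (p.1 : E))
      ∂(μ.toSphere.prod (.volumeIoiPow (Module.finrank ℝ E - 1))) := by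
  rw [← μ.measurePreserving_homeomorphUnitSphereProd.integral_comp
    (Homeomorph.measurableEmbedding _) (fun p => F ((p.2 : ℝ) • (p.1 : E)))]
  rw [← restrict_compl_singleton (μ := μ) 0,
    ← integral_subtype_comap (measurableSet_singleton _).compl]
  rw [restrict_compl_singleton]
  refine integral_congr_ae (.of_forall fun x => ?_)
  have : ‖(x : E)‖ ≠ 0 := norm_ne_zero_iff.2 x.2
  simp [smul_smul, this]

lemma integrable_polar {F : E → ℝ} (hF : Integrable F μ) :
    Integrable (fun p : sphere (0 : E) 1 × Set.Ioi (0 : ℝ) => F ((p.2 : ℝ) • (p.1 : E)))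
      (μ.toSphere.prod (.volumeIoiPow (Module.finrank ℝ E - 1))) := by
  rw [← μ.measurePreserving_homeomorphUnitSphereProd.integrable_comp_emb
    (Homeomorph.measurableEmbedding _)]
  rw [← restrict_compl_singleton (μ := μ) 0, ← IntegrableOn,
    integrableOn_iff_comap_subtypeVal (by measurability)] at hF
  refine hF.congr (.of_forall fun x => ?_)
  have : ‖(x : E)‖ ≠ 0 := norm_ne_zero_iff.2 x.2
  simp [smul_smul, this]
end polar

lemma integral_radial (k : ℕ) (g : ℝ → ℝ) :
    ∫ r : Set.Ioi (0 : ℝ), g r ∂(.volumeIoiPow k) = ∫ y in Set.Ioi (0 : ℝ), y ^ k * g y := by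
  simp only [Measure.volumeIoiPow, ENNReal.ofReal]
  rw [integral_withDensity_eq_integral_smul,
    integral_subtype_comap measurableSet_Ioi fun a ↦ Real.toNNReal (a ^ k) • g a,
    setIntegral_congr_fun measurableSet_Ioi fun x hx ↦ ?_]
  · rw [NNReal.smul_def, Real.coe_toNNReal _ (pow_nonneg hx.out.le _), smul_eq_mul]
  · exact (measurable_subtype_coe.pow_const _).real_toNNReal

lemma integrable_radial (k : ℕ) (g : ℝ → ℝ)
    (hg : IntegrableOn (fun y => y ^ k * g y) (Set.Ioi 0)) :
    Integrable (fun r : Set.Ioi (0 : ℝ) => g r) (.volumeIoiPow k) := by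
  rw [integrableOn_iff_comap_subtypeVal measurableSet_Ioi] at hg
  rw [Measure.volumeIoiPow, integrable_withDensity_iff_integrable_smul' (by fun_prop) (by simp)]
  refine hg.congr (.of_forall ?_)
  rintro ⟨x, hx : 0 < x⟩
  simp (disch := positivity) [ENNReal.toReal_ofReal]

/-- Radial Gaussian moments are finite; `volumeIoiPow k` has density `r ^ k`. -/
lemma gauss_moment_integrable (k j : ℕ) :
    Integrable (fun r : Set.Ioi (0 : ℝ) => (r : ℝ) ^ j * Real.exp (-(r : ℝ) ^ 2 / 2))
      (.volumeIoiPow k) := by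
  apply integrable_radial k (fun r => r ^ j * Real.exp (-r ^ 2 / 2))
  refine (integrableOn_rpow_mul_exp_neg_mul_sq (b := 1 / 2) (by norm_num) (s := (k + j : ℕ))
    (by have : (0 : ℝ) ≤ (k + j : ℕ) := by positivity
        linarith)).congr_fun ?_ measurableSet_Ioi
  intro x hx
  simp only [Real.rpow_natCast, pow_add, mul_assoc]
  ring_nf

/-- The second moment of a standard Gaussian vector in dimension `k + 1` is `k + 1`, written in
terms of the (unnormalized) radial distribution. -/
lemma gauss_moment (k : ℕ) :
    ∫ r : Set.Ioi (0 : ℝ), (r : ℝ) ^ 2 * Real.exp (-(r : ℝ) ^ 2 / 2) ∂(.volumeIoiPow k) =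
      (k + 1) * ∫ r : Set.Ioi (0 : ℝ), Real.exp (-(r : ℝ) ^ 2 / 2) ∂(.volumeIoiPow k) := by
  rw [integral_radial k (fun r => r ^ 2 * Real.exp (-r ^ 2 / 2)),
    integral_radial k (fun r => Real.exp (-r ^ 2 / 2))]
  have h : ∀ j : ℕ, ∫ y in Set.Ioi (0 : ℝ), y ^ j * Real.exp (-y ^ 2 / 2) =
      (1 / 2 : ℝ) ^ (-((j : ℝ) + 1) / 2) * (1 / 2) * Real.Gamma (((j : ℝ) + 1) / 2) := by
    intro j
    rw [← integral_rpow_mul_exp_neg_mul_rpow (p := 2) (by norm_num)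
      (by have : (0 : ℝ) ≤ j := by positivity
          linarith) (by norm_num)]
    refine setIntegral_congr_fun measurableSet_Ioi fun x hx => ?_
    simp only [Real.rpow_natCast, Real.rpow_two]
    ring_nf
  have e : ∀ y : ℝ, y ^ k * (y ^ 2 * Real.exp (-y ^ 2 / 2)) =
      y ^ (k + 2) * Real.exp (-y ^ 2 / 2) := fun y => by ring
  simp only [e]
  rw [h, h]
  have e1 : (((k + 2 : ℕ) : ℝ) + 1) / 2 = ((k : ℝ) + 1) / 2 + 1 := by push_cast; ring
  have e2 : -(((k + 2 : ℕ) : ℝ) + 1) / 2 = -((k : ℝ) + 1) / 2 - 1 := by push_cast; ring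
  rw [e1, e2, Real.Gamma_add_one (by positivity), Real.rpow_sub_one (by norm_num)]
  ring

section gauss
variable {E : Type*} [NormedAddCommGroup E] [InnerProductSpace ℝ E] [FiniteDimensional ℝ E]
  [MeasurableSpace E] [BorelSpace E]

lemma gauss_integrable : Integrable (fun x : E => Real.exp (-‖x‖ ^ 2 / 2)) := by
  have := (GaussianFourier.integrable_cexp_neg_mul_sq_norm_add (V := E) (b := 1 / 2)
    (by norm_num) 0 0).norm
  refine this.congr (.of_forall fun x => ?_)
  simp only [Complex.norm_exp]
  congr 1
  simp [← Complex.ofReal_pow]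
  ring

/-- Completing the square. -/
lemma gauss_exp_eq {E : Type*} [NormedAddCommGroup E] [InnerProductSpace ℝ E] (a x : E) :
    Real.exp ⟪a, x⟫ * Real.exp (-‖x‖ ^ 2 / 2) =
    Real.exp (‖a‖ ^ 2 / 2) * Real.exp (-‖x - a‖ ^ 2 / 2) := by
  rw [← Real.exp_add, ← Real.exp_add, norm_sub_sq_real, real_inner_comm]
  ring_nf

lemma gauss_cosh_integrable (a : E) :
    Integrable (fun x : E => Real.cosh ⟪a, x⟫ * Real.exp (-‖x‖ ^ 2 / 2)) := by
  have h : ∀ a : E, Integrable (fun x : E => Real.exp ⟪a, x⟫ * Real.exp (-‖x‖ ^ 2 / 2)) := by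
    intro a
    simp only [gauss_exp_eq]
    exact ((gauss_integrable (E := E)).comp_sub_right a).const_mul _
  refine (((h a).add (h (-a))).div_const 2).congr (.of_forall fun x => ?_)
  simp [Real.cosh_eq]
  ring

lemma gauss_cosh (a : E) :
    ∫ x : E, Real.cosh ⟪a, x⟫ * Real.exp (-‖x‖ ^ 2 / 2) =
      Real.exp (‖a‖ ^ 2 / 2) * ∫ x : E, Real.exp (-‖x‖ ^ 2 / 2) := by
  have h : ∀ a : E, Integrable (fun x : E => Real.exp ⟪a, x⟫ * Real.exp (-‖x‖ ^ 2 / 2)) := by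
    intro a
    simp only [gauss_exp_eq]
    exact ((gauss_integrable (E := E)).comp_sub_right a).const_mul _
  have h2 : ∀ a : E, ∫ x : E, Real.exp ⟪a, x⟫ * Real.exp (-‖x‖ ^ 2 / 2) =
      Real.exp (‖a‖ ^ 2 / 2) * ∫ x : E, Real.exp (-‖x‖ ^ 2 / 2) := by
    intro a
    simp only [gauss_exp_eq]
    rw [integral_const_mul, integral_sub_right_eq_self (fun x : E => Real.exp (-‖x‖ ^ 2 / 2))]
  have e : ∀ x : E, Real.cosh ⟪a, x⟫ * Real.exp (-‖x‖ ^ 2 / 2) =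
      (Real.exp ⟪a, x⟫ * Real.exp (-‖x‖ ^ 2 / 2) +
        Real.exp ⟪-a, x⟫ * Real.exp (-‖x‖ ^ 2 / 2)) / 2 := fun x => by
    simp [Real.cosh_eq]; ring
  simp only [e]
  rw [integral_div, integral_add (h a) (h (-a)), h2, h2, norm_neg]
  ring

/-- Sub-Gaussian bound on the sphere of dimension `N - 1`:
the mean of `cosh (√N ⟨a, u⟩)` is at most `exp (‖a‖² / 2)`. Write a standard Gaussian vector as
`r u` with `u` uniform on the sphere and `r` independent of `u`, so that `E r² = N`. Since
`cosh (r v)` is a convex function of `r²`, Jensen's inequality in `r` bounds the mean of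
`cosh (√N ⟨a, u⟩)` by that of `cosh ⟨a, r u⟩`, which is `exp (‖a‖² / 2)`. The tangent line at
`r² = N` plays the role of Jensen's inequality, and all integrals are left unnormalized. -/
lemma sphere_cosh [Nontrivial E] (a : E) :
    ∫ u : sphere (0 : E) 1, Real.cosh (√(Module.finrank ℝ E) * ⟪a, (u : E)⟫)
      ∂(volume : Measure E).toSphere ≤
      Real.exp (‖a‖ ^ 2 / 2) * (volume : Measure E).toSphere.real Set.univ := by
  set k := Module.finrank ℝ E - 1 with hk
  have hN : 0 < Module.finrank ℝ E := Module.finrank_pos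
  have hNk : (Module.finrank ℝ E : ℝ) = k + 1 := by
    rw [hk, Nat.cast_sub hN]; simp
  set R := √(Module.finrank ℝ E) with hR
  have hRpos : 0 < R := Real.sqrt_pos.2 (by exact_mod_cast hN)
  have hR2 : R ^ 2 = k + 1 := by rw [hR, Real.sq_sqrt (by positivity), hNk]
  set σ := (volume : Measure E).toSphere with hσ
  set ν := Measure.volumeIoiPow k with hν
  let w : Set.Ioi (0 : ℝ) → ℝ := fun r => Real.exp (-(r : ℝ) ^ 2 / 2)
  have hw0 : Integrable w ν := by simpa using gauss_moment_integrable k 0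
  have hw2 : Integrable (fun r : Set.Ioi (0 : ℝ) => (r : ℝ) ^ 2 * w r) ν :=
    gauss_moment_integrable k 2
  set W := ∫ r, w r ∂ν with hW
  have hbd : ∀ g : E → ℝ, Continuous g → Integrable (fun u : sphere (0 : E) 1 => g u) σ := by
    intro g hg
    exact (hg.comp continuous_subtype_val).integrable_of_hasCompactSupport
      (HasCompactSupport.of_compactSpace _)
  let C : E → ℝ := fun u => Real.cosh (R * ⟪a, u⟫)
  let c : E → ℝ := fun u => ⟪a, u⟫ * Real.sinh (R * ⟪a, u⟫) / (2 * R)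
  have hC : Integrable (fun u : sphere (0 : E) 1 => C u) σ := hbd C (by fun_prop)
  have hc : Integrable (fun u : sphere (0 : E) 1 => c u) σ := hbd c (by fun_prop)
  have hv : Integrable (fun r : Set.Ioi (0 : ℝ) => ((r : ℝ) ^ 2 - R ^ 2) * w r) ν := by
    simp only [sub_mul]
    exact hw2.sub (hw0.const_mul _)
  have hv0 : ∫ r : Set.Ioi (0 : ℝ), ((r : ℝ) ^ 2 - R ^ 2) * w r ∂ν = 0 := by
    simp only [sub_mul]
    rw [integral_sub hw2 (hw0.const_mul _), integral_const_mul, gauss_moment, hR2]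
    exact sub_self _
  have hnorm : ∀ p : sphere (0 : E) 1 × Set.Ioi (0 : ℝ), ‖(p.2 : ℝ) • (p.1 : E)‖ = p.2 := by
    rintro ⟨u, r⟩
    have : (0 : ℝ) < r := r.2
    simp [norm_smul, this.le]
  have hA : ∫ x : E, Real.exp (-‖x‖ ^ 2 / 2) = σ.real Set.univ * W := by
    rw [integral_polar]
    simp only [hnorm]
    exact integral_fun_snd w
  have hB : ∫ p, C p.1 * w p.2 + c p.1 * (((p.2 : ℝ) ^ 2 - R ^ 2) * w p.2) ∂(σ.prod ν) =
      (∫ u, C u ∂σ) * W := by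
    rw [integral_add (hC.mul_prod hw0) (hc.mul_prod hv),
      integral_prod_mul (fun u : sphere (0 : E) 1 => C u) w,
      integral_prod_mul (fun u : sphere (0 : E) 1 => c u)
        (fun r : Set.Ioi (0 : ℝ) => ((r : ℝ) ^ 2 - R ^ 2) * w r), hv0]
    simp
    left; rfl
  have hle : (∫ u, C u ∂σ) * W ≤ Real.exp (‖a‖ ^ 2 / 2) * (σ.real Set.univ * W) := by
    rw [← hA, ← gauss_cosh, ← hB,
      integral_polar (volume : Measure E)]
    refine integral_mono ((hC.mul_prod hw0).add (hc.mul_prod hv))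
      (integrable_polar _ (gauss_cosh_integrable a)) ?_
    rintro ⟨u, r⟩
    have h := cosh_tangent ⟪a, (u : E)⟫ (le_of_lt r.2) hRpos
    have hw : 0 ≤ w r := (Real.exp_pos _).le
    have h2 := mul_le_mul_of_nonneg_right h hw
    have hnr : ‖(r : ℝ) • (u : E)‖ = r := hnorm (u, r)
    simp only [hnr, inner_smul_right]
    refine le_trans (le_of_eq ?_) h2
    simp only [C, c]; ring
  have hWpos : 0 < W := by
    have hpos : 0 < ∫ x : E, Real.exp (-‖x‖ ^ 2 / 2) :=
      integral_exp_pos gauss_integrable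
    rw [hA] at hpos
    exact (pos_iff_pos_of_mul_pos hpos).1 (lt_of_le_of_ne measureReal_nonneg
      (fun h => by rw [← h] at hpos; simp at hpos))
  rw [← mul_assoc] at hle
  exact le_of_mul_le_mul_right hle hWpos
end gauss

/-! ### Maxima of finitely many functionals on the sphere -/

lemma sphereUniform_cosh {N : ℕ} (hN : 0 < N) (a : EuclideanSpace ℝ (Fin N)) :
    ∫ u, Real.cosh (√N * ⟪a, (u : EuclideanSpace ℝ (Fin N))⟫) ∂(sphereUniform N) ≤
      Real.exp (‖a‖ ^ 2 / 2) := by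
  have : Nonempty (Fin N) := ⟨⟨0, hN⟩⟩
  have h := sphere_cosh a
  rw [finrank_euclideanSpace_fin] at h
  set σ := (volume : Measure (EuclideanSpace ℝ (Fin N))).toSphere with hσ
  have hne : σ Set.univ ≠ 0 := by
    rw [Measure.measure_univ_ne_zero]; exact Measure.toSphere_ne_zero _
  have hpos : 0 < σ.real Set.univ := ENNReal.toReal_pos hne (measure_ne_top _ _)
  rw [sphereUniform, integral_smul_measure, smul_eq_mul, ENNReal.toReal_inv, ← hσ]
  change (σ.real Set.univ)⁻¹ * _ ≤ _
  rw [inv_mul_le_iff₀ hpos]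
  linarith

lemma sphereUniform_prob {N : ℕ} (hN : 0 < N) : IsProbabilityMeasure (sphereUniform N) := by
  have : Nonempty (Fin N) := ⟨⟨0, hN⟩⟩
  constructor
  rw [sphereUniform, Measure.smul_apply, smul_eq_mul]
  apply ENNReal.inv_mul_cancel _ (measure_ne_top _ _)
  rw [Measure.measure_univ_ne_zero]; exact Measure.toSphere_ne_zero _

/-- Maximal inequality on the sphere: if `κ Z` is dominated pointwise by the maximum of the
absolute values of finitely many functionals of norm at most one, then the mean of `κ Z` is at
most `√(2 log (2 |T|) / N)`, by the exponential moment bound `sphereUniform_cosh`. No integrability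
of `Z` is needed, because the integral of a non-integrable function is `0`. -/
lemma sphere_max_le {N : ℕ} (hN : 0 < N) {ι : Type*} (T : Finset ι)
    (a : ι → EuclideanSpace ℝ (Fin N)) (ha : ∀ i ∈ T, ‖a i‖ ≤ 1)
    (Z : sphere (0 : EuclideanSpace ℝ (Fin N)) 1 → ℝ) {κ : ℝ}
    (hZ : ∀ u, ∃ i ∈ T, κ * Z u ≤ |⟪a i, (u : EuclideanSpace ℝ (Fin N))⟫|) :
    κ * ∫ u, Z u ∂(sphereUniform N) ≤ √(2 * Real.log (2 * T.card) / N) := by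
  have := sphereUniform_prob hN
  by_cases hint : Integrable Z (sphereUniform N)
  swap
  · rw [integral_undef hint, mul_zero]; exact Real.sqrt_nonneg _
  have : Nonempty (Fin N) := ⟨⟨0, hN⟩⟩
  obtain ⟨u₀⟩ : Nonempty (sphere (0 : EuclideanSpace ℝ (Fin N)) 1) :=
    (NormedSpace.sphere_nonempty.2 zero_le_one).to_subtype
  have hT : 1 ≤ T.card := by
    obtain ⟨i, hi, _⟩ := hZ u₀
    exact Finset.card_pos.2 ⟨i, hi⟩
  have hT' : (1 : ℝ) ≤ T.card := by exact_mod_cast hT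
  have hsN : 0 < √(N : ℝ) := Real.sqrt_pos.2 (by exact_mod_cast hN)
  have hlog : 0 < Real.log (2 * T.card) := Real.log_pos (by linarith)
  -- `t` minimizes `log (2 |T|) / t + t / 2`.
  set t := √(2 * Real.log (2 * T.card)) with ht
  have htpos : 0 < t := Real.sqrt_pos.2 (by linarith)
  have ht2 : t ^ 2 = 2 * Real.log (2 * T.card) := Real.sq_sqrt (by linarith)
  let Φ : sphere (0 : EuclideanSpace ℝ (Fin N)) 1 → ℝ := fun u =>
    ∑ i ∈ T, 2 * Real.cosh (√N * ⟪t • a i, (u : EuclideanSpace ℝ (Fin N))⟫)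
  have hΦi : ∀ i ∈ T, Integrable (fun u : sphere (0 : EuclideanSpace ℝ (Fin N)) 1 =>
      2 * Real.cosh (√N * ⟪t • a i, (u : EuclideanSpace ℝ (Fin N))⟫)) (sphereUniform N) := by
    intro i _
    refine Continuous.integrable_of_hasCompactSupport (by fun_prop)
      (HasCompactSupport.of_compactSpace _)
  have hΦ : Integrable Φ (sphereUniform N) := integrable_finsetSum _ hΦi
  set c := 2 * (T.card : ℝ) * Real.exp (t ^ 2 / 2) with hc
  have hcpos : 0 < c := by positivity
  have hΦc : ∫ u, Φ u ∂(sphereUniform N) ≤ c := by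
    simp only [Φ]
    rw [integral_finsetSum _ hΦi]
    calc _ ≤ ∑ i ∈ T, 2 * Real.exp (t ^ 2 / 2) := by
          refine Finset.sum_le_sum fun i hi => ?_
          rw [integral_const_mul]
          have h1 := sphereUniform_cosh hN (t • a i)
          have h2 : ‖t • a i‖ ^ 2 ≤ t ^ 2 := by
            rw [norm_smul, mul_pow, Real.norm_eq_abs, sq_abs]
            have := pow_le_one₀ (n := 2) (norm_nonneg _) (ha i hi)
            nlinarith [sq_nonneg t]
          have h3 : Real.exp (‖t • a i‖ ^ 2 / 2) ≤ Real.exp (t ^ 2 / 2) := by gcongr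
          linarith
      _ = c := by rw [Finset.sum_const, nsmul_eq_mul, hc]; ring
  have hlogc : Real.log c = t ^ 2 := by
    rw [hc, Real.log_mul (by positivity) (by positivity), Real.log_exp, ht2]; ring
  have hpt : ∀ u, (t * √N * κ) * Z u ≤ t ^ 2 + Φ u / c - 1 := by
    intro u
    obtain ⟨i, hi, hiu⟩ := hZ u
    set y := √N * ⟪t • a i, (u : EuclideanSpace ℝ (Fin N))⟫ with hy
    have hy' : (t * √N * κ) * Z u ≤ |y| := by
      rw [hy, inner_smul_left, abs_mul, abs_mul, abs_of_pos hsN]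
      simp only [conj_trivial]
      rw [abs_of_pos htpos]
      have := mul_le_mul_of_nonneg_left hiu (mul_pos htpos hsN).le
      linarith
    have h1 : Real.exp |y| ≤ Φ u := by
      refine le_trans ?_ (Finset.single_le_sum (f := fun i =>
        2 * Real.cosh (√N * ⟪t • a i, (u : EuclideanSpace ℝ (Fin N))⟫))
        (fun j _ => by positivity) hi)
      change _ ≤ 2 * Real.cosh y
      rw [← Real.cosh_abs, Real.cosh_eq]
      linarith [Real.exp_pos (-|y|)]
    -- Tangent line of the logarithm at `c`, in place of Jensen's inequality for `log`.
    have h2 : |y| ≤ Real.log c + Φ u / c - 1 := by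
      have h3 := Real.add_one_le_exp (|y| - Real.log c)
      rw [Real.exp_sub, Real.exp_log hcpos] at h3
      have h4 : Real.exp |y| / c ≤ Φ u / c := by gcongr
      linarith
    rw [hlogc] at h2
    linarith
  have hI := integral_mono (hint.const_mul (t * √N * κ))
    (((integrable_const (t ^ 2)).add (hΦ.div_const c)).sub (integrable_const 1)) hpt
  have e1 : ∫ u, (t ^ 2 + Φ u / c - 1) ∂(sphereUniform N) =
      t ^ 2 + (∫ u, Φ u ∂(sphereUniform N)) / c - 1 := by
    have hadd : Integrable (fun u => t ^ 2 + Φ u / c) (sphereUniform N) :=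
      (integrable_const (t ^ 2)).add (hΦ.div_const c)
    rw [integral_sub hadd (integrable_const 1),
      integral_add (integrable_const (t ^ 2)) (hΦ.div_const c), integral_div]
    simp
  have hI' : (t * √N * κ) * ∫ u, Z u ∂(sphereUniform N) ≤
      t ^ 2 + (∫ u, Φ u ∂(sphereUniform N)) / c - 1 := by
    rw [← integral_const_mul, ← e1]; exact hI
  have h1 : (∫ u, Φ u ∂(sphereUniform N)) / c ≤ 1 := (div_le_one hcpos).2 hΦc
  rw [Real.sqrt_div (by linarith), ← ht, le_div_iff₀ hsN]
  refine le_of_mul_le_mul_left ?_ htpos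
  linarith

/-! ### Product states -/

lemma prodPure_quad_left {m n : ℕ} (x h : Fin m → ℂ) (y : Fin n → ℂ) (t : ℝ) :
    prodPureBip (x + t • h) y = prodPureBip x y +
      t • ((Matrix.vecMulVec x (star h) + Matrix.vecMulVec h (star x)) ⊗ₖ
        Matrix.vecMulVec y (star y)) + (t ^ 2) • prodPureBip h y := by
  ext i j
  simp [prodPureBip, Matrix.vecMulVec_apply]
  ring

lemma prodPure_quad_right {m n : ℕ} (x : Fin m → ℂ) (y h : Fin n → ℂ) (t : ℝ) :
    prodPureBip x (y + t • h) = prodPureBip x y +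
      t • (Matrix.vecMulVec x (star x) ⊗ₖ
        (Matrix.vecMulVec y (star h) + Matrix.vecMulVec h (star y))) +
        (t ^ 2) • prodPureBip x h := by
  ext i j
  simp [prodPureBip, Matrix.vecMulVec_apply]
  ring

lemma prodPure_continuous {m n : ℕ} (X : Matrix (Fin m × Fin n) (Fin m × Fin n) ℂ) :
    Continuous (fun p : (Fin m → ℂ) × (Fin n → ℂ) => ((X * prodPureBip p.1 p.2).trace).re) := by
  have : Continuous (fun p : (Fin m → ℂ) × (Fin n → ℂ) => prodPureBip p.1 p.2) := by
    refine continuous_matrix fun i j => ?_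
    simp only [prodPureBip, Matrix.kroneckerMap_apply, Matrix.vecMulVec_apply, Pi.star_apply]
    fun_prop
  fun_prop

lemma norm_eq_one_iff_sum {k : ℕ} (x : PiLp 2 (fun _ : Fin k => ℂ)) :
    ‖x‖ = 1 ↔ ∑ i, ‖x i‖ ^ 2 = 1 := by
  rw [← sq_eq_sq₀ (norm_nonneg _) zero_le_one, PiLp.norm_sq_eq_of_L2, one_pow]

/-- Products of nets: `⟨x ⊗ y|X|x ⊗ y⟩` is a quadratic form in `x` for fixed `y` and conversely,
so `net_step` can be applied to one factor after the other. -/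
lemma product_net {m n : ℕ} {δ : ℝ} (hδ : 2 * δ ^ 2 ≤ 1)
    {s : Finset (PiLp 2 (fun _ : Fin m => ℂ))} (hs : ∀ c ∈ s, ‖c‖ = 1)
    (hsn : ∀ x : PiLp 2 (fun _ : Fin m => ℂ), ‖x‖ = 1 → ∃ c ∈ s, ‖c - x‖ ≤ δ)
    {s' : Finset (PiLp 2 (fun _ : Fin n => ℂ))} (hs' : ∀ c ∈ s', ‖c‖ = 1)
    (hsn' : ∀ x : PiLp 2 (fun _ : Fin n => ℂ), ‖x‖ = 1 → ∃ c ∈ s', ‖c - x‖ ≤ δ)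
    (X : Matrix (Fin m × Fin n) (Fin m × Fin n) ℂ)
    (x : PiLp 2 (fun _ : Fin m => ℂ)) (y : PiLp 2 (fun _ : Fin n => ℂ))
    (hx : ‖x‖ = 1) (hy : ‖y‖ = 1) :
    ∃ c ∈ s, ∃ d ∈ s', (1 - 2 * δ ^ 2) ^ 2 * |((X * prodPureBip x y).trace).re| ≤
      |((X * prodPureBip c d).trace).re| := by
  obtain ⟨c, hc, h1⟩ := net_step (q := fun x : PiLp 2 (fun _ : Fin m => ℂ) =>
      ((X * prodPureBip x y).trace).re)
    ((prodPure_continuous X).comp (f := fun x : PiLp 2 (fun _ : Fin m => ℂ) =>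
      ((x : Fin m → ℂ), (y : Fin n → ℂ))) (by fun_prop)) (fun x h => ⟨_, fun t => by
      change ((X * prodPureBip ((x : Fin m → ℂ) + t • (h : Fin m → ℂ)) y).trace).re = _
      rw [prodPure_quad_left]
      simp only [mul_add, Matrix.mul_smul, Matrix.trace_add, Matrix.trace_smul, Complex.add_re,
        Complex.real_smul, Complex.re_ofReal_mul]
      rfl⟩) hs hsn x hx
  obtain ⟨d, hd, h2⟩ := net_step (q := fun y : PiLp 2 (fun _ : Fin n => ℂ) =>
      ((X * prodPureBip c y).trace).re)
    ((prodPure_continuous X).comp (f := fun y : PiLp 2 (fun _ : Fin n => ℂ) =>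
      ((c : Fin m → ℂ), (y : Fin n → ℂ))) (by fun_prop)) (fun x h => ⟨_, fun t => by
      change ((X * prodPureBip c ((x : Fin n → ℂ) + t • (h : Fin n → ℂ))).trace).re = _
      rw [prodPure_quad_right]
      simp only [mul_add, Matrix.mul_smul, Matrix.trace_add, Matrix.trace_smul, Complex.add_re,
        Complex.real_smul, Complex.re_ofReal_mul]
      rfl⟩) hs' hsn' y hy
  refine ⟨c, hc, d, hd, le_trans ?_ h2⟩
  have := mul_le_mul_of_nonneg_left h1 (sub_nonneg.2 hδ)
  simp only at this
  rw [sq, mul_assoc]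
  exact this

lemma trace_vecMulVec_star {k : ℕ} (x : Fin k → ℂ) (hx : ∑ i, ‖x i‖ ^ 2 = 1) :
    star x ⬝ᵥ x = 1 := by
  simp only [dotProduct, Pi.star_apply, RCLike.star_def, RCLike.conj_mul]
  have : ((∑ i, ‖x i‖ ^ 2 : ℝ) : ℂ) = 1 := by rw [hx]; simp
  simpa using this

/-- On traceless Hermitian matrices, the functional `X ↦ Tr(X P)` given by a pure product state `P`
is represented by `P - 𝟙/(mn)`, whose Hilbert–Schmidt norm is `√(1 - 1/(mn))`. -/
lemma exists_repr {m n N : ℕ} (hm : 0 < m) (hn : 0 < n)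
    {f : EuclideanSpace ℝ (Fin N) →ₗ[ℝ] Matrix (Fin m × Fin n) (Fin m × Fin n) ℂ}
    (hf : IsHermParam f) (x : Fin m → ℂ) (y : Fin n → ℂ)
    (hx : ∑ i, ‖x i‖ ^ 2 = 1) (hy : ∑ i, ‖y i‖ ^ 2 = 1) :
    ∃ a : EuclideanSpace ℝ (Fin N), ‖a‖ ≤ 1 ∧
      ∀ u, ((f u * prodPureBip x y).trace).re = ⟪a, u⟫ := by
  set P := prodPureBip x y with hP
  have hPtr : P.trace = 1 := by
    rw [hP, prodPureBip, Matrix.trace_kronecker, Matrix.trace_vecMulVec, Matrix.trace_vecMulVec,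
      dotProduct_comm, trace_vecMulVec_star x hx, dotProduct_comm, trace_vecMulVec_star y hy, one_mul]
  have hPP : P * P = P := by
    rw [hP, prodPureBip, ← Matrix.mul_kronecker_mul, Matrix.vecMulVec_mul_vecMulVec,
      Matrix.vecMulVec_mul_vecMulVec, trace_vecMulVec_star x hx, trace_vecMulVec_star y hy]
    simp
  have hPh : P.IsHermitian := by
    rw [Matrix.IsHermitian, hP, prodPureBip, Matrix.conjTranspose_kronecker,
      Matrix.conjTranspose_vecMulVec, Matrix.conjTranspose_vecMulVec]
    simp
  set D : ℝ := (m : ℝ) * n with hD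
  have hDpos : 0 < D := by positivity
  have htr1 : (1 : Matrix (Fin m × Fin n) (Fin m × Fin n) ℂ).trace = D := by
    simp [hD]
  obtain ⟨a, ha⟩ := hf.surj (P - (D⁻¹ : ℝ) • (1 : Matrix _ _ ℂ)) (by
      rw [Matrix.IsHermitian, Matrix.conjTranspose_sub, hPh, Matrix.conjTranspose_smul]
      simp) (by
      rw [Matrix.trace_sub, Matrix.trace_smul, hPtr, htr1, Complex.real_smul, ← Complex.ofReal_mul,
        inv_mul_cancel₀ hDpos.ne']
      simp)
  refine ⟨a, ?_, fun u => ?_⟩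
  · have h := hf.inner_eq a a
    rw [real_inner_self_eq_norm_sq, ha] at h
    simp only [sub_mul, mul_sub, hPP, Matrix.smul_mul, Matrix.mul_smul, Matrix.mul_one,
      Matrix.one_mul, Matrix.trace_sub, Matrix.trace_smul, hPtr, htr1, Complex.sub_re,
      Complex.real_smul, Complex.re_ofReal_mul, Complex.one_re, Complex.ofReal_re] at h
    have hinv : D⁻¹ * D = 1 := inv_mul_cancel₀ hDpos.ne'
    have : 0 < D⁻¹ := by positivity
    rw [hinv] at h
    have h2 : ‖a‖ ^ 2 ≤ 1 := by linarith
    exact (sq_le_one_iff₀ (norm_nonneg _)).1 h2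
  · rw [real_inner_comm, ← hf.inner_eq, ha, mul_sub, Matrix.mul_smul, Matrix.mul_one,
      Matrix.trace_sub, Matrix.trace_smul, hf.traceless]
    simp

/-! ### Conclusion -/

lemma finrank_cplx (k : ℕ) : Module.finrank ℝ (PiLp 2 (fun _ : Fin k => ℂ)) = 2 * k := by
  rw [(WithLp.linearEquiv 2 ℝ (Fin k → ℂ)).finrank_eq, Module.finrank_pi_fintype]
  simp [Complex.finrank_real_complex, mul_comm]

/-- The final numerical estimate: after squaring it follows from
`2 (1/3 + 4n) m² n ≤ 9 (m² n² - 1)`, which holds for `m, n ≥ 2`. -/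
lemma numeric_bound {m n : ℕ} (hm : 2 ≤ m) (hmn : m ≤ n) {L K : ℝ} (hL : 3 * Real.log 2 ≤ L)
    (hK : K ≤ Real.log 2 + (2 * m + 2 * n) * L) :
    √(2 * K / ((m * n) ^ 2 - 1 : ℕ)) ≤ 3 * √L / (m * √n) := by
  have hl2 : 0 < Real.log 2 := Real.log_pos (by norm_num)
  have hLpos : 0 < L := by linarith
  have hm' : (2 : ℝ) ≤ m := by exact_mod_cast hm
  have hmn' : (m : ℝ) ≤ n := by exact_mod_cast hmn
  have hn' : (2 : ℝ) ≤ n := hm'.trans hmn'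
  have hN : (((m * n) ^ 2 - 1 : ℕ) : ℝ) = ((m : ℝ) * n) ^ 2 - 1 := by
    have : 1 ≤ (m * n) ^ 2 := Nat.one_le_pow _ _
      (Nat.mul_pos (by omega) (by omega))
    push_cast [Nat.cast_sub this]; ring
  have hm2 : (4 : ℝ) ≤ (m : ℝ) ^ 2 := by nlinarith
  have hmn2 : (8 : ℝ) ≤ (m : ℝ) ^ 2 * n := by nlinarith
  have hNpos : 0 < ((m : ℝ) * n) ^ 2 - 1 := by rw [mul_pow]; nlinarith
  have e : 3 * √L / (m * √n) = √(9 * L / (m ^ 2 * n)) := by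
    rw [Real.sqrt_div (by positivity), Real.sqrt_mul (by norm_num), Real.sqrt_mul (by positivity),
      Real.sqrt_sq (by positivity), show (9 : ℝ) = 3 ^ 2 by norm_num, Real.sqrt_sq (by norm_num)]
  rw [e, hN]
  apply Real.sqrt_le_sqrt
  rw [div_le_div_iff₀ hNpos (by positivity)]
  have hK' : K ≤ (1 / 3 + 4 * n) * L := by nlinarith
  have h1 : 2 * K * ((m : ℝ) ^ 2 * n) ≤ 2 * ((1 / 3 + 4 * n) * L) * ((m : ℝ) ^ 2 * n) := by gcongr
  refine h1.trans ?_
  have h2 : 2 * (1 / 3 + 4 * n) * ((m : ℝ) ^ 2 * n) ≤ 9 * (((m : ℝ) * n) ^ 2 - 1) := by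
    rw [mul_pow]; nlinarith
  nlinarith

/-- For `2 ≤ m ≤ n`, the mean width of the set of separable states on
`ℂ^m ⊗ ℂ^n` satisfies `w(S) ≤ 3 √(ln(1+2/δ)) / ((1-2δ²)² m √n)` for every
`1/10 < δ < 1/4`. -/
theorem meanWidth_separable_le (m n : ℕ) (hm : 2 ≤ m) (hmn : m ≤ n)
    (f : EuclideanSpace ℝ (Fin ((m * n) ^ 2 - 1)) →ₗ[ℝ]
      Matrix (Fin m × Fin n) (Fin m × Fin n) ℂ)
    (hf : IsHermParam f)
    (δ : ℝ) (hδ₁ : 1 / 10 < δ) (hδ₂ : δ < 1 / 4) :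
    matMeanWidth f (SepBip m n) ≤
      3 * Real.sqrt (Real.log (1 + 2 / δ)) /
        ((1 - 2 * δ ^ 2) ^ 2 * m * Real.sqrt n) := by
  have hδ0 : 0 < δ := by linarith
  have hδ2 : 2 * δ ^ 2 < 1 := by nlinarith
  have hn : 0 < n := by omega
  have hN : 0 < (m * n) ^ 2 - 1 := by
    have : 4 ≤ m * n := by nlinarith
    have : 1 < (m * n) ^ 2 := by nlinarith
    omega
  obtain ⟨s, hs, hcard, hsn⟩ := exists_net (PiLp 2 (fun _ : Fin m => ℂ)) hδ0
  obtain ⟨s', hs', hcard', hsn'⟩ := exists_net (PiLp 2 (fun _ : Fin n => ℂ)) hδ0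
  rw [finrank_cplx] at hcard hcard'
  have hκ : 0 < (1 - 2 * δ ^ 2) ^ 2 := by
    have : 0 < 1 - 2 * δ ^ 2 := by linarith
    positivity
  -- Vectors representing the product states of the net; the value off the net is irrelevant.
  have hrep : ∀ p : PiLp 2 (fun _ : Fin m => ℂ) × PiLp 2 (fun _ : Fin n => ℂ), ∃ a,
      p ∈ s ×ˢ s' → ‖a‖ ≤ 1 ∧ ∀ u, ((f u * prodPureBip p.1 p.2).trace).re = ⟪a, u⟫ := by
    intro p
    by_cases hp : p ∈ s ×ˢ s'
    · rw [Finset.mem_product] at hp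
      obtain ⟨a, ha⟩ := exists_repr (by omega) hn hf p.1 p.2
        ((norm_eq_one_iff_sum _).1 (hs _ hp.1)) ((norm_eq_one_iff_sum _).1 (hs' _ hp.2))
      exact ⟨a, fun _ => ha⟩
    · exact ⟨0, fun h => absurd h hp⟩
  choose a ha using hrep
  have hTne : (s ×ˢ s').Nonempty := by
    have hne : ∀ k : ℕ, 0 < k → ∃ x : PiLp 2 (fun _ : Fin k => ℂ), ‖x‖ = 1 := fun k hk => by
      have : Nonempty (Fin k) := ⟨⟨0, hk⟩⟩
      exact exists_norm_eq _ zero_le_one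
    obtain ⟨x, hx⟩ := hne m (by omega)
    obtain ⟨y, hy⟩ := hne n hn
    obtain ⟨c, hc, _⟩ := hsn x hx
    obtain ⟨d, hd, _⟩ := hsn' y hy
    exact ⟨(c, d), Finset.mk_mem_product hc hd⟩
  have key := sphere_max_le hN (s ×ˢ s') a (fun p hp => (ha p hp).1)
    (fun u => sSup ((fun M => ((f u * M).trace).re) '' SepBip m n)) (κ := (1 - 2 * δ ^ 2) ^ 2) (by
      intro u
      obtain ⟨p, hp, hmax⟩ := Finset.exists_max_image (s ×ˢ s')
        (fun p => |⟪a p, (u : EuclideanSpace ℝ (Fin ((m * n) ^ 2 - 1)))⟫|) hTne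
      refine ⟨p, hp, ?_⟩
      rw [mul_comm, ← le_div_iff₀ hκ]
      apply Real.sSup_le _ (by positivity)
      rintro _ ⟨M, hM, rfl⟩
      have hlin : IsLinearMap ℝ (fun M : Matrix (Fin m × Fin n) (Fin m × Fin n) ℂ =>
          ((f u * M).trace).re) :=
        ⟨fun A B => by simp [mul_add], fun r A => by simp⟩
      have hhalf := convex_halfSpace_le hlin
        (|⟪a p, (u : EuclideanSpace ℝ (Fin ((m * n) ^ 2 - 1)))⟫| / (1 - 2 * δ ^ 2) ^ 2)
      refine convexHull_min ?_ hhalf hM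
      rintro _ ⟨x, y, hx, hy, rfl⟩
      obtain ⟨c, hc, d, hd, hcd⟩ := product_net hδ2.le hs hsn hs' hsn' (f u)
        (WithLp.toLp 2 x) (WithLp.toLp 2 y)
        ((norm_eq_one_iff_sum _).2 hx) ((norm_eq_one_iff_sum _).2 hy)
      have hcdm := Finset.mk_mem_product hc hd
      rw [Set.mem_ofPred_eq, le_div_iff₀ hκ, mul_comm]
      refine le_trans ?_ (hmax _ hcdm)
      rw [← (ha _ hcdm).2]
      exact (mul_le_mul_of_nonneg_left (le_abs_self _) hκ.le).trans hcd)
  have hb : 9 ≤ 1 + 2 / δ := by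
    have : 8 ≤ 2 / δ := by rw [le_div_iff₀ hδ0]; linarith
    linarith
  have hL : 3 * Real.log 2 ≤ Real.log (1 + 2 / δ) := by
    rw [← Nat.cast_ofNat (n := 3), ← Real.log_pow]
    exact Real.log_le_log (by norm_num) (by norm_num; linarith)
  have hTpos : (0 : ℝ) < (s ×ˢ s').card := by exact_mod_cast Finset.card_pos.2 hTne
  have hK : Real.log (2 * (s ×ˢ s').card) ≤
      Real.log 2 + (2 * m + 2 * n) * Real.log (1 + 2 / δ) := by
    rw [Real.log_mul (by norm_num) hTpos.ne']
    have h1 : ((s ×ˢ s').card : ℝ) ≤ (1 + 2 / δ) ^ (2 * m + 2 * n) := by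
      rw [Finset.card_product, Nat.cast_mul, pow_add]
      gcongr
    have h2 := Real.log_le_log hTpos h1
    rw [Real.log_pow] at h2
    push_cast at h2
    linarith
  have hfin := key.trans (numeric_bound hm hmn hL hK)
  change (1 - 2 * δ ^ 2) ^ 2 * matMeanWidth f (SepBip m n) ≤ _ at hfin
  rw [mul_comm, ← le_div_iff₀ hκ, div_div] at hfin
  refine hfin.trans (le_of_eq ?_)
  congr 1
  ring

end
end

section
/- Fix k ≥ 2 and 0 < α < 1/4, and let G be a traceless GUE matrix on (ℂ^d)^{⊗k}. Then the probability that the random matrix ρ_G = d^{−k}(1 + α d^{−k/2} G) fails to be a state which is PPT across every bipartition is at most exp(−c d^k), for some universal constant c > 0. -/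
/-!
Write `n = d ^ k`. Since `α < 1/4`, the state `ρ_G` and all its partial transposes are positive as
soon as every eigenvalue of every `G^{Γ_b}` (including `b = ∅`) has modulus at most `4 √n`, and
this is shown to fail with probability at most `exp (-n / 8)`.

For a unit vector `v`, the functional `x ↦ ⟨v, f(x)^{Γ_b} v⟩` has norm at most one on `ℝ^N`, because
`f` is isometric and `Γ_b` permutes matrix entries, hence preserves the Hilbert–Schmidt norm
(`abs_ptransForm_le`). Its values under the Gaussian measure therefore exceed `T` in modulus with
probability at most `2 exp (-T² / 2)` (`stdGaussian_abs_tail`).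

The unit sphere of `ℂ^n` has a `1/4`-net of at most `9 ^ (2 n)` points (`exists_quarter_net`), and
a bound `7/8 * t` on the quadratic form over the net bounds the spectral radius by `t`
(`abs_eigenvalue_le_of_net`). With `t = 4 √n`, the union bound over the net and the
`2 ^ k ≤ n` subsets `b` gives `2 n * 81 ^ n * exp (-49 n / 8) ≤ exp (-n / 8)`
(`union_bound_le_exp`).
-/

open scoped ComplexOrder

noncomputable section

/-- Index type for `(ℂ^d)^{⊗ k}`. -/
abbrev MIdx (k d : ℕ) := Fin k → Fin d

/-- Operators on `(ℂ^d)^{⊗ k}`. -/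
abbrev MOp (k d : ℕ) := Matrix (MIdx k d) (MIdx k d) ℂ

/-- A bipartition of the `k` subsystems is a nonempty proper subset. -/
def IsBipartition {k : ℕ} (b : Finset (Fin k)) : Prop := b.Nonempty ∧ b ≠ Finset.univ

/-- The finset of all bipartitions. -/
def bipartitions (k : ℕ) : Finset (Finset (Fin k)) :=
  Finset.univ.filter fun b => b.Nonempty ∧ b ≠ Finset.univ

/-- Index type of the subsystems in `b`. -/
abbrev SubIdx {k : ℕ} (d : ℕ) (b : Finset (Fin k)) := {i : Fin k // i ∈ b} → Fin d

/-- Index type of the subsystems in the complement of `b`. -/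
abbrev CoIdx {k : ℕ} (d : ℕ) (b : Finset (Fin k)) := {i : Fin k // i ∉ b} → Fin d

def restr {k d : ℕ} (b : Finset (Fin k)) (x : MIdx k d) : SubIdx d b := fun i => x i
def corestr {k d : ℕ} (b : Finset (Fin k)) (x : MIdx k d) : CoIdx d b := fun i => x i

/-- The pure product state `|φ⟩⟨φ| ⊗ |ψ⟩⟨ψ|` across the bipartition `{b|b̄}`. -/
def prodPure {k d : ℕ} (b : Finset (Fin k)) (φ : SubIdx d b → ℂ) (ψ : CoIdx d b → ℂ) :
    MOp k d := fun x y =>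
  φ (restr b x) * ψ (corestr b x) * star (φ (restr b y)) * star (ψ (corestr b y))

/-- States separable across the bipartition `{b|b̄}`. -/
def SepAcross {k : ℕ} (d : ℕ) (b : Finset (Fin k)) : Set (MOp k d) :=
  convexHull ℝ {M | ∃ (φ : SubIdx d b → ℂ) (ψ : CoIdx d b → ℂ),
    (∑ x, ‖φ x‖ ^ 2 = 1) ∧ (∑ y, ‖ψ y‖ ^ 2 = 1) ∧ M = prodPure b φ ψ}

/-- Biseparable states: the convex hull of the union of the separable sets over all
bipartitions. -/
def Biseparable (k d : ℕ) : Set (MOp k d) :=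
  convexHull ℝ (⋃ b ∈ bipartitions k, SepAcross d b)

/-- A state: positive semidefinite with unit trace. -/
def IsState {n : Type*} [Fintype n] (ρ : Matrix n n ℂ) : Prop :=
  ρ.PosSemidef ∧ ρ.trace = 1

/-- The positive part `[A]_+` of a Hermitian matrix `A` (junk value `0` otherwise). -/
noncomputable def matPosPart {n : Type*} [Fintype n] [DecidableEq n] (A : Matrix n n ℂ) :
    Matrix n n ℂ :=
  if hA : A.IsHermitian then
    (hA.eigenvectorUnitary : Matrix n n ℂ) *
      Matrix.diagonal (fun i => ((max (hA.eigenvalues i) 0 : ℝ) : ℂ)) *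
      star (hA.eigenvectorUnitary : Matrix n n ℂ)
  else 0

/-- `A ⪰ B` in the positive semidefinite (Loewner) order. -/
def Loewner {n : Type*} [Fintype n] (A B : Matrix n n ℂ) : Prop := (A - B).PosSemidef

end


open MeasureTheory Metric
open scoped RealInnerProductSpace

noncomputable section

/-- The partial transposition across the bipartition `{b|b̄}` (transposing the tensor
factor corresponding to `b`). -/
def ptrans {k d : ℕ} (b : Finset (Fin k)) (M : MOp k d) : MOp k d := fun x y =>
  M (fun j => if j ∈ b then y j else x j) (fun j => if j ∈ b then x j else y j)

/-- The set of states on `(ℂ^d)^{⊗k}` which are PPT across every bipartition. -/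
def FullyPPT (k d : ℕ) : Set (MOp k d) :=
  {ρ | IsState ρ ∧ ∀ b ∈ bipartitions k, (ptrans b ρ).PosSemidef}

end

noncomputable section

open ProbabilityTheory

/-- The standard Gaussian measure on `ℝ^N`. -/
def stdGaussian (N : ℕ) : MeasureTheory.Measure (Fin N → ℝ) :=
  MeasureTheory.Measure.pi fun _ => gaussianReal 0 1

/-- The traceless GUE matrix associated to a point `x ∈ ℝ^N` through an isometric
parametrization `f` of the traceless Hermitian subspace: when `x` is distributed
according to the standard Gaussian measure, `f(x)` is a standard Gaussian vector in the
traceless Hermitian matrices with the Hilbert–Schmidt inner product, i.e. a traceless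
GUE matrix. -/
def gue {ι : Type*} [Fintype ι] {N : ℕ}
    (f : EuclideanSpace ℝ (Fin N) →ₗ[ℝ] Matrix ι ι ℂ) (x : Fin N → ℝ) : Matrix ι ι ℂ :=
  f ((EuclideanSpace.equiv (Fin N) ℝ).symm x)

/-- The random state `ρ_G = d^{-k} (1 + α d^{-k/2} G)` on `(ℂ^d)^{⊗k}`. -/
def rhoG (k d : ℕ) (α : ℝ) (G : MOp k d) : MOp k d :=
  (((d : ℝ) ^ k)⁻¹) • ((1 : MOp k d) + (α / (d : ℝ) ^ ((k : ℝ) / 2)) • G)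

end

/-! ### Gaussian tails of linear functionals -/

open ProbabilityTheory in
/-- Chernoff bound with parameter `s`: the moment generating function of `∑ a_i x_i` at `s` is
`exp (s² ∑ a_i² / 2)`. -/
lemma stdGaussian_tail {N : ℕ} (a : Fin N → ℝ) (ha : ∑ i, a i ^ 2 ≤ 1) {s : ℝ} (hs : 0 ≤ s) :
    _root_.stdGaussian N {x | s ≤ ∑ i, a i * x i} ≤ ENNReal.ofReal (Real.exp (-(s ^ 2 / 2))) := by
  have hP : IsProbabilityMeasure (_root_.stdGaussian N) := by unfold _root_.stdGaussian; infer_instance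
  have hfun : (fun x : Fin N → ℝ => Real.exp (s * ∑ i, a i * x i)) =
      fun x => ∏ i, Real.exp ((s * a i) * x i) := by
    funext x
    rw [← Real.exp_sum, Finset.mul_sum]
    simp only [mul_assoc]
  have hint : Integrable (fun x : Fin N → ℝ => Real.exp (s * ∑ i, a i * x i)) (_root_.stdGaussian N) := by
    rw [hfun]
    exact Integrable.fintype_prod (f := fun i y => Real.exp ((s * a i) * y))
      fun i => integrable_exp_mul_gaussianReal _
  have hmgf : mgf (fun x : Fin N → ℝ => ∑ i, a i * x i) (_root_.stdGaussian N) s ≤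
      Real.exp (s ^ 2 / 2) := by
    have h1 : ∀ t : ℝ, ∫ y, Real.exp (t * y) ∂(gaussianReal 0 1) = Real.exp (t ^ 2 / 2) := by
      intro t
      have := congrFun (mgf_id_gaussianReal (μ := 0) (v := 1)) t
      simpa [mgf] using this
    unfold mgf
    rw [hfun]
    unfold _root_.stdGaussian
    rw [integral_fintype_prod_eq_prod (fun i y => Real.exp ((s * a i) * y))]
    simp only [h1]
    rw [← Real.exp_sum, Real.exp_le_exp, ← Finset.sum_div]
    simp only [mul_pow]
    rw [← Finset.mul_sum]
    nlinarith [sq_nonneg s]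
  have := measure_ge_le_exp_mul_mgf (μ := _root_.stdGaussian N) (X := fun x => ∑ i, a i * x i) s hs hint
  rw [← ofReal_measureReal]
  apply ENNReal.ofReal_le_ofReal
  refine this.trans ?_
  calc _ ≤ Real.exp (-s * s) * Real.exp (s ^ 2 / 2) := by gcongr
    _ = _ := by rw [← Real.exp_add]; congr 1; ring

/-- The coefficient vector of a functional of norm at most one has Euclidean norm at most one, so
the one-sided tail bound applies to the functional and its negative. -/
lemma stdGaussian_abs_tail {N : ℕ} (L : EuclideanSpace ℝ (Fin N) →ₗ[ℝ] ℝ)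
    (hL : ∀ x, |L x| ≤ ‖x‖) {s : ℝ} (hs : 0 ≤ s) :
    stdGaussian N {x | s < |L ((EuclideanSpace.equiv (Fin N) ℝ).symm x)|} ≤
      2 * ENNReal.ofReal (Real.exp (-(s ^ 2 / 2))) := by
  set a : Fin N → ℝ := fun i => L (EuclideanSpace.single i 1) with ha_def
  have hLa : ∀ x : Fin N → ℝ,
      L ((EuclideanSpace.equiv (Fin N) ℝ).symm x) = ∑ i, a i * x i := by
    intro x
    have hx : (EuclideanSpace.equiv (Fin N) ℝ).symm x =
        ∑ i, x i • EuclideanSpace.single i (1 : ℝ) := by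
      ext j
      simp [Finset.sum_apply, Pi.single_apply]
    rw [hx, map_sum]
    simp [ha_def, mul_comm]
  have ha : ∑ i, a i ^ 2 ≤ 1 := by
    have h1 := hL ((EuclideanSpace.equiv (Fin N) ℝ).symm a)
    rw [hLa, EuclideanSpace.norm_eq] at h1
    have h2 : ∑ i, a i * a i = ∑ i, a i ^ 2 := by simp [sq]
    simp only [Real.norm_eq_abs, sq_abs] at h1
    rw [h2] at h1
    have h0 : 0 ≤ ∑ i, a i ^ 2 := by positivity
    rw [abs_of_nonneg h0] at h1
    change _ ≤ √(∑ i, a i ^ 2) at h1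
    nlinarith [Real.sq_sqrt h0, Real.sqrt_nonneg (∑ i, a i ^ 2)]
  have hsub : {x : Fin N → ℝ | s < |L ((EuclideanSpace.equiv (Fin N) ℝ).symm x)|} ⊆
      {x | s ≤ ∑ i, a i * x i} ∪ {x | s ≤ ∑ i, (-a i) * x i} := by
    intro x hx
    simp only [Set.mem_ofPred_eq, hLa, lt_abs] at hx
    rcases hx with h | h
    · exact Or.inl h.le
    · right
      simpa using h.le
  calc _ ≤ _ := measure_mono hsub
    _ ≤ _ := measure_union_le _ _
    _ ≤ _ := add_le_add (stdGaussian_tail a ha hs) (stdGaussian_tail _ (by simpa using ha) hs)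
    _ = _ := (two_mul _).symm

/-! ### A net of the unit sphere -/

open Module in
/-- Volume comparison: the balls of radius `1/8` around the points are disjoint and lie in the ball
of radius `9/8` around the origin. -/
lemma card_le_of_quarter_separated {E : Type*} [NormedAddCommGroup E] [NormedSpace ℝ E]
    [FiniteDimensional ℝ E] (s : Finset E) (hs : ∀ c ∈ s, ‖c‖ ≤ 1)
    (h : ∀ c ∈ s, ∀ d ∈ s, c ≠ d → 1 / 4 ≤ ‖c - d‖) : s.card ≤ 9 ^ finrank ℝ E := by
  borelize E
  let μ : Measure E := Measure.addHaar
  have D : Set.Pairwise (s : Set E) (Function.onFun Disjoint fun c => ball (c : E) (1 / 8)) := by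
    rintro c hc d hd hcd
    apply ball_disjoint_ball
    rw [dist_eq_norm]
    have := h c hc d hd hcd
    linarith
  have hsub : (⋃ c ∈ s, ball (c : E) (1 / 8)) ⊆ ball (0 : E) (9 / 8) := by
    refine Set.iUnion₂_subset fun x hx => ball_subset_ball' ?_
    rw [dist_zero_right]
    linarith [hs x hx]
  have I : (s.card : ENNReal) * ENNReal.ofReal ((1 / 8 : ℝ) ^ finrank ℝ E) * μ (ball 0 1) ≤
      ENNReal.ofReal ((9 / 8 : ℝ) ^ finrank ℝ E) * μ (ball 0 1) :=
    calc
      _ = μ (⋃ c ∈ s, ball (c : E) (1 / 8)) := by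
        rw [measure_biUnion_finset D fun c _ => measurableSet_ball]
        simp only [μ.addHaar_ball_of_pos _ (show (0 : ℝ) < 1 / 8 by norm_num)]
        simp only [Finset.sum_const, nsmul_eq_mul, mul_assoc]
      _ ≤ μ (ball (0 : E) (9 / 8)) := measure_mono hsub
      _ = _ := by
        simp only [μ.addHaar_ball_of_pos _ (show (0 : ℝ) < 9 / 8 by norm_num)]
  have J := (ENNReal.mul_le_mul_iff_left (measure_ball_pos _ _ zero_lt_one).ne'
    measure_ball_lt_top.ne).1 I
  have K : (s.card : ℝ) ≤ (9 : ℝ) ^ finrank ℝ E := by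
    have := ENNReal.toReal_le_of_le_ofReal (by positivity) J
    rw [ENNReal.toReal_mul, ENNReal.toReal_natCast, ENNReal.toReal_ofReal (by positivity),
      div_pow, div_pow, one_pow, mul_one_div] at this
    exact (div_le_div_iff_of_pos_right (by positivity)).1 this
  exact mod_cast K

open Module in
lemma exists_quarter_net (E : Type*) [NormedAddCommGroup E] [NormedSpace ℝ E]
    [FiniteDimensional ℝ E] :
    ∃ s : Finset E, s.card ≤ 9 ^ finrank ℝ E ∧ (∀ v ∈ s, ‖v‖ = 1) ∧
      ∀ u : E, ‖u‖ = 1 → ∃ v ∈ s, ‖u - v‖ ≤ 1 / 4 := by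
  classical
  -- A quarter-separated family of unit vectors of maximal cardinality is a net.
  let P : ℕ → Prop := fun m => ∃ s : Finset E, s.card = m ∧ (∀ v ∈ s, ‖v‖ = 1) ∧
    ∀ c ∈ s, ∀ d ∈ s, c ≠ d → 1 / 4 ≤ ‖c - d‖
  have hb : ∀ m, P m → m ≤ 9 ^ finrank ℝ E := by
    rintro m ⟨s, rfl, h1, h2⟩
    exact card_le_of_quarter_separated s (fun c hc => (h1 c hc).le) h2
  have h0 : P 0 := ⟨∅, by simp⟩
  obtain ⟨s, hsc, h1, h2⟩ := Nat.findGreatest_spec (P := P) (Nat.zero_le (9 ^ finrank ℝ E)) h0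
  refine ⟨s, hsc ▸ Nat.findGreatest_le _, h1, fun u hu => ?_⟩
  by_contra! hcon
  have hus : u ∉ s := fun hus => by
    have := hcon u hus
    norm_num at this
  have hP : P (s.card + 1) := by
    refine ⟨insert u s, Finset.card_insert_of_notMem hus, ?_, ?_⟩
    · intro v hv
      rcases Finset.mem_insert.1 hv with rfl | hv
      exacts [hu, h1 v hv]
    · intro c hc d hd hcd
      rcases Finset.mem_insert.1 hc with rfl | hc' <;>
        rcases Finset.mem_insert.1 hd with rfl | hd'
      · exact absurd rfl hcd
      · exact (hcon d hd').le
      · rw [norm_sub_rev]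
        exact (hcon c hc').le
      · exact h2 c hc' d hd' hcd
  have := Nat.le_findGreatest (hb _ hP) hP
  omega

/-! ### Quadratic forms of Hermitian matrices -/

open scoped Matrix

lemma quadForm_eq_sum {ι : Type*} [Fintype ι] [DecidableEq ι] {M : Matrix ι ι ℂ}
    (hM : M.IsHermitian) (v : EuclideanSpace ℂ ι) :
    star v.ofLp ⬝ᵥ (M *ᵥ v.ofLp) =
      ((∑ i, hM.eigenvalues i * ‖inner ℂ (hM.eigenvectorBasis i) v‖ ^ 2 : ℝ) : ℂ) := by
  have h1 : star v.ofLp ⬝ᵥ (M *ᵥ v.ofLp) = inner ℂ v (WithLp.toLp 2 (M *ᵥ v.ofLp)) := by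
    rw [EuclideanSpace.inner_eq_star_dotProduct, dotProduct_comm]
  have h2 : ∀ i, inner ℂ (hM.eigenvectorBasis i) (WithLp.toLp 2 (M *ᵥ v.ofLp)) =
      (hM.eigenvalues i : ℂ) * inner ℂ (hM.eigenvectorBasis i) v := by
    intro i
    have h3 : star (hM.eigenvectorBasis i).ofLp ᵥ* M =
        star (M *ᵥ (hM.eigenvectorBasis i).ofLp) := by
      rw [Matrix.star_mulVec, hM.eq]
    rw [EuclideanSpace.inner_eq_star_dotProduct, EuclideanSpace.inner_eq_star_dotProduct,
      dotProduct_comm, Matrix.dotProduct_mulVec, h3, hM.mulVec_eigenvectorBasis, dotProduct_comm]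
    simp [dotProduct_smul]
  rw [h1, ← hM.eigenvectorBasis.sum_inner_mul_inner]
  push_cast
  refine Finset.sum_congr rfl fun i _ => ?_
  rw [h2, ← inner_conj_symm v, mul_left_comm, ← Complex.conj_mul']

/-- The spectral radius is controlled by the quadratic form on a `1/4`-net. If `e_j` is an eigenvector
for an eigenvalue `λ` of largest modulus and `v` is a net point with `‖e_j - v‖ ≤ 1/4`, then
`|⟨v, M v⟩| ≥ |λ| (2 |⟨e_j, v⟩|² - 1)`. The error is quadratic in the mesh because `e_j` is an
eigenvector; an error linear in the mesh would be too large for the threshold `4 √(d ^ k)`. -/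
lemma abs_eigenvalue_le_of_net {ι : Type*} [Fintype ι] [DecidableEq ι] {M : Matrix ι ι ℂ}
    (hM : M.IsHermitian) (s : Finset (EuclideanSpace ℂ ι)) (hs1 : ∀ v ∈ s, ‖v‖ = 1)
    (hs : ∀ u : EuclideanSpace ℂ ι, ‖u‖ = 1 → ∃ v ∈ s, ‖u - v‖ ≤ 1 / 4) {t : ℝ}
    (ht : ∀ v ∈ s, |(star v.ofLp ⬝ᵥ (M *ᵥ v.ofLp)).re| ≤ 7 / 8 * t) (i : ι) :
    |hM.eigenvalues i| ≤ t := by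
  obtain ⟨j, -, hj⟩ := Finset.exists_max_image Finset.univ (fun i => |hM.eigenvalues i|)
    ⟨i, Finset.mem_univ i⟩
  refine (hj i (Finset.mem_univ i)).trans ?_
  obtain ⟨v, hv, huv⟩ := hs (hM.eigenvectorBasis j) (hM.eigenvectorBasis.norm_eq_one j)
  have hq := ht v hv
  rw [quadForm_eq_sum hM, Complex.ofReal_re] at hq
  set c : ι → ℝ := fun i => ‖inner ℂ (hM.eigenvectorBasis i) v‖ ^ 2 with hc
  have hc0 : ∀ i, 0 ≤ c i := fun i => by positivity
  have hsum : ∑ i, c i = 1 := by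
    rw [hM.eigenvectorBasis.sum_sq_norm_inner_right, hs1 v hv, one_pow]
  have hsplit : ∑ i, hM.eigenvalues i * c i = hM.eigenvalues j * c j +
      ∑ i ∈ Finset.univ.erase j, hM.eigenvalues i * c i :=
    (Finset.add_sum_erase _ _ (Finset.mem_univ j)).symm
  have hrest : |∑ i ∈ Finset.univ.erase j, hM.eigenvalues i * c i| ≤
      |hM.eigenvalues j| * (1 - c j) := by
    have : 1 - c j = ∑ i ∈ Finset.univ.erase j, c i := by
      rw [← hsum, ← Finset.add_sum_erase _ _ (Finset.mem_univ j)]; ring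
    rw [this, Finset.mul_sum]
    refine (Finset.abs_sum_le_sum_abs _ _).trans (Finset.sum_le_sum fun i _ => ?_)
    rw [abs_mul, abs_of_nonneg (hc0 i)]
    exact mul_le_mul_of_nonneg_right (hj i (Finset.mem_univ i)) (hc0 i)
  -- `Re ⟨e_j, v⟩ = 1 - ‖e_j - v‖² / 2 ≥ 31/32`
  have hcj : (31 / 32 : ℝ) ^ 2 ≤ c j := by
    have h1 := norm_sub_sq (𝕜 := ℂ) (hM.eigenvectorBasis j) v
    rw [hM.eigenvectorBasis.norm_eq_one, hs1 v hv] at h1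
    have h2 : ‖hM.eigenvectorBasis j - v‖ ^ 2 ≤ (1 / 4) ^ 2 := by gcongr
    have h3 := RCLike.re_le_norm (inner ℂ (hM.eigenvectorBasis j) v)
    have : 31 / 32 ≤ ‖inner ℂ (hM.eigenvectorBasis j) v‖ := by linarith
    simp only [hc]
    gcongr
  have h5 : |hM.eigenvalues j| * c j ≤ 7 / 8 * t + |hM.eigenvalues j| * (1 - c j) := by
    calc |hM.eigenvalues j| * c j = |hM.eigenvalues j * c j| := by
          rw [abs_mul, abs_of_nonneg (hc0 j)]
      _ = |(∑ i, hM.eigenvalues i * c i) -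
            ∑ i ∈ Finset.univ.erase j, hM.eigenvalues i * c i| := by rw [hsplit]; ring_nf
      _ ≤ _ := (abs_sub _ _).trans (add_le_add hq hrest)
  nlinarith [abs_nonneg (hM.eigenvalues j)]

lemma posSemidef_one_add_smul {ι : Type*} [Fintype ι] [DecidableEq ι] {M : Matrix ι ι ℂ}
    (hM : M.IsHermitian) {β : ℝ} (h : ∀ i, 0 ≤ 1 + β * hM.eigenvalues i) :
    (1 + β • M).PosSemidef := by
  refine Matrix.PosSemidef.of_dotProduct_mulVec_nonneg ?_ fun x => ?_
  · refine Matrix.isHermitian_one.add ?_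
    rw [Matrix.IsHermitian, Matrix.conjTranspose_smul, hM.eq, star_trivial]
  · have h1 := quadForm_eq_sum hM (WithLp.toLp 2 x)
    have h2 : star x ⬝ᵥ x =
        ((∑ i, ‖inner ℂ (hM.eigenvectorBasis i) (WithLp.toLp 2 x)‖ ^ 2 : ℝ) : ℂ) := by
      rw [hM.eigenvectorBasis.sum_sq_norm_inner_right, EuclideanSpace.norm_sq_eq]
      simp only [dotProduct, Pi.star_apply]
      push_cast
      refine Finset.sum_congr rfl fun i _ => ?_
      exact Complex.conj_mul' (x i)
    dsimp only at h1
    rw [Matrix.add_mulVec, Matrix.one_mulVec, Matrix.smul_mulVec, dotProduct_add,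
      dotProduct_smul, h1, h2, Complex.real_smul, ← Complex.ofReal_mul, ← Complex.ofReal_add,
      Complex.zero_le_real, Finset.mul_sum, ← Finset.sum_add_distrib]
    refine Finset.sum_nonneg fun i _ => ?_
    have := mul_nonneg (h i) (sq_nonneg ‖inner ℂ (hM.eigenvectorBasis i) (WithLp.toLp 2 x)‖)
    linarith

/-! ### Partial transposition and the random state -/

/-- The permutation of pairs of multi-indices underlying the partial transposition `ptrans b`:
it exchanges the coordinates indexed by `b`. -/
def ptransEquiv {k d : ℕ} (b : Finset (Fin k)) : MIdx k d × MIdx k d ≃ MIdx k d × MIdx k d :=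
  Function.Involutive.toPerm
    (fun p => (fun j => if j ∈ b then p.2 j else p.1 j, fun j => if j ∈ b then p.1 j else p.2 j))
    (by
      rintro ⟨x, y⟩
      ext j <;> by_cases h : j ∈ b <;> simp [h])

lemma sum_norm_sq_ptrans {k d : ℕ} (b : Finset (Fin k)) (M : MOp k d) :
    ∑ p : MIdx k d × MIdx k d, ‖ptrans b M p.1 p.2‖ ^ 2 =
      ∑ p : MIdx k d × MIdx k d, ‖M p.1 p.2‖ ^ 2 :=
  (ptransEquiv b).sum_comp fun p => ‖M p.1 p.2‖ ^ 2

lemma ptrans_isHermitian {k d : ℕ} (b : Finset (Fin k)) {M : MOp k d} (hM : M.IsHermitian) :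
    (ptrans b M).IsHermitian := by
  ext x y
  exact congrFun₂ hM _ _

lemma ptrans_one {k d : ℕ} (b : Finset (Fin k)) : ptrans b (1 : MOp k d) = 1 := by
  ext x y
  simp only [ptrans, Matrix.one_apply]
  congr 1
  simp only [funext_iff, eq_iff_iff]
  refine forall_congr' fun j => ?_
  by_cases h : j ∈ b <;> simp [h, eq_comm]

lemma ptrans_empty {k d : ℕ} (M : MOp k d) : ptrans ∅ M = M := by
  ext x y
  simp [ptrans]

lemma ptrans_rhoG {k d : ℕ} (b : Finset (Fin k)) (α : ℝ) (G : MOp k d) :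
    ptrans b (rhoG k d α G) = rhoG k d α (ptrans b G) := by
  have h : ptrans b (rhoG k d α G) = (((d : ℝ) ^ k)⁻¹) •
      (ptrans b (1 : MOp k d) + (α / (d : ℝ) ^ ((k : ℝ) / 2)) • ptrans b G) := rfl
  rw [h, ptrans_one, rhoG]

/-- Cauchy–Schwarz in Hilbert–Schmidt norm, where `|v⟩⟨v|` has norm one. -/
lemma abs_quadForm_sq_le {ι : Type*} [Fintype ι] (M : Matrix ι ι ℂ) (v : EuclideanSpace ℂ ι)
    (hv : ‖v‖ = 1) :
    |(star v.ofLp ⬝ᵥ (M *ᵥ v.ofLp)).re| ^ 2 ≤ ∑ p : ι × ι, ‖M p.1 p.2‖ ^ 2 := by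
  have h1 : star v.ofLp ⬝ᵥ (M *ᵥ v.ofLp) =
      ∑ p : ι × ι, M p.1 p.2 * (star (v p.1) * v p.2) := by
    rw [Fintype.sum_prod_type]
    simp only [dotProduct, Matrix.mulVec, Finset.mul_sum, Pi.star_apply]
    refine Finset.sum_congr rfl fun i _ => Finset.sum_congr rfl fun j _ => ?_
    ring
  have h2 : ∑ p : ι × ι, (‖v p.1‖ * ‖v p.2‖) ^ 2 = 1 := by
    simp only [mul_pow]
    rw [Fintype.sum_prod_type]
    dsimp only
    rw [← Finset.sum_mul_sum, ← EuclideanSpace.norm_sq_eq, hv]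
    norm_num
  calc |(star v.ofLp ⬝ᵥ (M *ᵥ v.ofLp)).re| ^ 2
      ≤ (∑ p : ι × ι, ‖M p.1 p.2‖ * (‖v p.1‖ * ‖v p.2‖)) ^ 2 := by
        gcongr
        refine (Complex.abs_re_le_norm _).trans ?_
        rw [h1]
        refine (norm_sum_le _ _).trans (le_of_eq ?_)
        simp
    _ ≤ _ := Finset.sum_mul_sq_le_sq_mul_sq _ _ _
    _ = _ := by rw [h2, mul_one]

lemma IsHermParam.sum_norm_sq {ι : Type*} [Fintype ι] {N : ℕ}
    {f : EuclideanSpace ℝ (Fin N) →ₗ[ℝ] Matrix ι ι ℂ} (hf : IsHermParam f)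
    (x : EuclideanSpace ℝ (Fin N)) : ∑ p : ι × ι, ‖f x p.1 p.2‖ ^ 2 = ‖x‖ ^ 2 := by
  rw [← real_inner_self_eq_norm_sq, ← hf.inner_eq, Fintype.sum_prod_type, Matrix.trace,
    Complex.re_sum]
  refine Finset.sum_congr rfl fun i _ => ?_
  rw [Matrix.diag_apply, Matrix.mul_apply, Complex.re_sum]
  refine Finset.sum_congr rfl fun j _ => ?_
  rw [← (hf.herm x).apply j i, Complex.star_def, Complex.mul_conj', ← Complex.ofReal_pow,
    Complex.ofReal_re]

/-- The real-linear functional `x ↦ ⟨v, f(x)^{Γ_b} v⟩`. -/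
noncomputable def ptransForm {k d N : ℕ} (b : Finset (Fin k))
    (f : EuclideanSpace ℝ (Fin N) →ₗ[ℝ] MOp k d) (v : EuclideanSpace ℂ (MIdx k d)) :
    EuclideanSpace ℝ (Fin N) →ₗ[ℝ] ℝ where
  toFun x := (star v.ofLp ⬝ᵥ (ptrans b (f x) *ᵥ v.ofLp)).re
  map_add' x y := by
    have h : ptrans b (f (x + y)) = ptrans b (f x) + ptrans b (f y) := by
      rw [map_add]; rfl
    rw [h, Matrix.add_mulVec, dotProduct_add, Complex.add_re]
  map_smul' r x := by
    have h : ptrans b (f (r • x)) = r • ptrans b (f x) := by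
      rw [map_smul]; rfl
    rw [h, Matrix.smul_mulVec, dotProduct_smul, Complex.smul_re, RingHom.id_apply]

lemma abs_ptransForm_le {k d N : ℕ} (b : Finset (Fin k))
    {f : EuclideanSpace ℝ (Fin N) →ₗ[ℝ] MOp k d} (hf : IsHermParam f)
    (v : EuclideanSpace ℂ (MIdx k d)) (hv : ‖v‖ = 1) (x : EuclideanSpace ℝ (Fin N)) :
    |ptransForm b f v x| ≤ ‖x‖ := by
  have := abs_quadForm_sq_le (ptrans b (f x)) v hv
  rw [sum_norm_sq_ptrans, hf.sum_norm_sq] at this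
  exact le_of_sq_le_sq this (norm_nonneg x)

lemma rhoG_posSemidef {k d : ℕ} (hd : 0 < d) {α : ℝ} (hα : 0 < α) (hα' : α < 1 / 4)
    {M : MOp k d} (hM : M.IsHermitian)
    (h : ∀ i, |hM.eigenvalues i| ≤ 4 * √((d : ℝ) ^ k)) : (rhoG k d α M).PosSemidef := by
  have hd' : (0 : ℝ) < d := by exact_mod_cast hd
  have hsqrt : (d : ℝ) ^ ((k : ℝ) / 2) = √((d : ℝ) ^ k) := by
    rw [Real.sqrt_eq_rpow, ← Real.rpow_natCast, ← Real.rpow_mul hd'.le]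
    ring_nf
  have hpos : 0 < √((d : ℝ) ^ k) := by positivity
  refine Matrix.PosSemidef.smul (posSemidef_one_add_smul hM fun i => ?_) (by positivity)
  have h1 := (abs_le.1 (h i)).1
  rw [hsqrt]
  have h2 : α / √((d : ℝ) ^ k) * -(4 * √((d : ℝ) ^ k)) ≤
      α / √((d : ℝ) ^ k) * hM.eigenvalues i := by gcongr
  have h3 : α / √((d : ℝ) ^ k) * -(4 * √((d : ℝ) ^ k)) = -(4 * α) := by
    field_simp
  linarith

lemma rhoG_trace {k d : ℕ} (hd : 0 < d) (α : ℝ) {G : MOp k d} (hG : G.trace = 0) :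
    (rhoG k d α G).trace = 1 := by
  have hd' : (d : ℂ) ≠ 0 := by exact_mod_cast hd.ne'
  rw [rhoG, Matrix.trace_smul, Matrix.trace_add, Matrix.trace_smul, hG, Matrix.trace_one]
  simp [hd']

/-- Numerical form of the union bound. With `n = d ^ k` there are `2 ^ k ≤ n` subsets, at most
`9 ^ (2 n)` net points and a two-sided Gaussian tail `2 exp (-49 n / 8)`; since `2 n ≤ 2 ^ n`, the
product is at most `162 ^ n exp (-49 n / 8)`, and `162 ≤ exp 6`. -/
lemma union_bound_le_exp {k d : ℕ} (hd : 2 ≤ d) :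
    (2 : ℝ) ^ k * (9 ^ (2 * d ^ k) * (2 * Real.exp (-((7 / 8 * (4 * √((d : ℝ) ^ k))) ^ 2 / 2)))) ≤
      Real.exp (-(1 / 8 * (d : ℝ) ^ k)) := by
  set n : ℕ := d ^ k with hn
  have hcast : ((d : ℝ) ^ k) = (n : ℝ) := by simp [hn]
  have h2k : (2 : ℝ) ^ k ≤ n := by
    rw [← hcast]
    gcongr
    exact_mod_cast hd
  have h2n : 2 * n ≤ 2 ^ n := by
    have hn1 : 1 ≤ n := Nat.one_le_pow _ _ (by omega)
    obtain ⟨m, hm⟩ := Nat.exists_eq_add_of_le hn1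
    rw [hm, add_comm, pow_succ, mul_comm]
    exact Nat.mul_le_mul_right 2 Nat.lt_two_pow_self
  have h2n' : (2 : ℝ) * n ≤ 2 ^ n := by exact_mod_cast h2n
  have hexp : (162 : ℝ) ≤ Real.exp 6 := by
    have h1 : (2.7 : ℝ) ≤ Real.exp 1 := by linarith [Real.exp_one_gt_d9]
    have h2 : Real.exp 6 = Real.exp 1 ^ 6 := by rw [← Real.exp_nat_mul]; norm_num
    rw [h2]
    calc (162 : ℝ) ≤ 2.7 ^ 6 := by norm_num
      _ ≤ _ := by gcongr
  have hsq : (7 / 8 * (4 * √((d : ℝ) ^ k))) ^ 2 / 2 = 49 / 8 * n := by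
    rw [hcast, mul_pow, mul_pow, Real.sq_sqrt (Nat.cast_nonneg n)]
    ring
  rw [hsq, hcast]
  calc (2 : ℝ) ^ k * (9 ^ (2 * n) * (2 * Real.exp (-(49 / 8 * n))))
      ≤ n * (9 ^ (2 * n) * (2 * Real.exp (-(49 / 8 * n)))) := by gcongr
    _ = (2 * n) * (81 ^ n * Real.exp (-(49 / 8 * n))) := by
        rw [pow_mul]; norm_num; ring
    _ ≤ 2 ^ n * (81 ^ n * Real.exp (-(49 / 8 * n))) := by gcongr
    _ = 162 ^ n * Real.exp (-(49 / 8 * n)) := by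
        rw [← mul_assoc, ← mul_pow]; norm_num
    _ ≤ Real.exp 6 ^ n * Real.exp (-(49 / 8 * n)) := by gcongr
    _ = Real.exp (-(1 / 8 * n)) := by
        rw [← Real.exp_nat_mul, ← Real.exp_add]; congr 1; ring

/-- Fix `k ≥ 2` and `0 < α < 1/4`, and let `G` be a traceless GUE
matrix on `(ℂ^d)^{⊗k}`. The probability that `ρ_G = d^{-k}(1 + α d^{-k/2} G)` fails to
be a state which is PPT across every bipartition is at most `exp(-c d^k)` for a
universal constant `c > 0`. -/
theorem rhoG_fullyPPT_prob :
    ∃ c : ℝ, 0 < c ∧ ∀ k : ℕ, 2 ≤ k → ∀ α : ℝ, 0 < α → α < 1 / 4 → ∀ d : ℕ, 2 ≤ d →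
      ∀ f : EuclideanSpace ℝ (Fin ((d ^ k) ^ 2 - 1)) →ₗ[ℝ] MOp k d, IsHermParam f →
        stdGaussian ((d ^ k) ^ 2 - 1)
            {x | rhoG k d α (gue f x) ∉ FullyPPT k d} ≤
          ENNReal.ofReal (Real.exp (-(c * (d : ℝ) ^ k))) := by
  refine ⟨1 / 8, by norm_num, ?_⟩
  intro k hk α hα hα' d hd
  generalize (d ^ k) ^ 2 - 1 = N
  intro f hf
  obtain ⟨s, hcard, hs1, hs⟩ := exists_quarter_net (EuclideanSpace ℂ (MIdx k d))
  set T : ℝ := 7 / 8 * (4 * √((d : ℝ) ^ k)) with hT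
  have hT0 : 0 ≤ T := by positivity
  -- The parameter `b = ∅` accounts for positivity of `ρ_G` itself.
  have hsub : {x | rhoG k d α (gue f x) ∉ FullyPPT k d} ⊆
      ⋃ b ∈ (Finset.univ : Finset (Finset (Fin k))), ⋃ v ∈ s,
        {x | T < |ptransForm b f v ((EuclideanSpace.equiv (Fin N) ℝ).symm x)|} := by
    intro x hx
    by_contra hcon
    simp only [Finset.mem_univ, Set.iUnion_true, Set.mem_iUnion, Set.mem_ofPred_eq, not_exists,
      not_lt] at hcon
    have hpos : ∀ b : Finset (Fin k), (ptrans b (rhoG k d α (gue f x))).PosSemidef := by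
      intro b
      rw [ptrans_rhoG]
      have hH : (ptrans b (gue f x)).IsHermitian := ptrans_isHermitian b (hf.herm _)
      exact rhoG_posSemidef (by omega) hα hα' hH
        (abs_eigenvalue_le_of_net hH s hs1 hs fun v hv => hcon b v hv)
    refine hx ⟨⟨?_, rhoG_trace (by omega) α (hf.traceless _)⟩, fun b _ => hpos b⟩
    have := hpos ∅
    rwa [ptrans_empty] at this
  have hdim : Module.finrank ℝ (EuclideanSpace ℂ (MIdx k d)) = 2 * d ^ k := by
    rw [← Module.finrank_mul_finrank ℝ ℂ (EuclideanSpace ℂ (MIdx k d)),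
      Complex.finrank_real_complex, finrank_euclideanSpace]
    simp
  rw [hdim] at hcard
  have hcard' : (s.card : ENNReal) ≤ 9 ^ (2 * d ^ k) := by exact_mod_cast hcard
  set p : ENNReal := 2 * ENNReal.ofReal (Real.exp (-(T ^ 2 / 2))) with hp
  calc stdGaussian N {x | rhoG k d α (gue f x) ∉ FullyPPT k d}
      ≤ _ := measure_mono hsub
    _ ≤ ∑ b : Finset (Fin k), ∑ v ∈ s, p := by
        refine (measure_biUnion_finset_le _ _).trans (Finset.sum_le_sum fun b _ => ?_)
        refine (measure_biUnion_finset_le _ _).trans (Finset.sum_le_sum fun v hv => ?_)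
        exact stdGaussian_abs_tail _ (abs_ptransForm_le b hf v (hs1 v hv)) hT0
    _ = 2 ^ k * (s.card * p) := by
        simp [Finset.sum_const, Finset.card_univ]
    _ ≤ 2 ^ k * (9 ^ (2 * d ^ k) * p) := by gcongr
    _ = ENNReal.ofReal ((2 : ℝ) ^ k * (9 ^ (2 * d ^ k) * (2 * Real.exp (-(T ^ 2 / 2))))) := by
        rw [ENNReal.ofReal_mul (by positivity), ENNReal.ofReal_mul (by positivity),
          ENNReal.ofReal_mul (by positivity), ENNReal.ofReal_pow (by positivity),
          ENNReal.ofReal_pow (by positivity), ENNReal.ofReal_ofNat, ENNReal.ofReal_ofNat]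
    _ ≤ _ := ENNReal.ofReal_le_ofReal (union_bound_le_exp hd)
end
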